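/- arXiv:2101.04986 — 3 statements merged into one kernel-verified Lean document; each statement's English description precedes it below -/
import Mathlib

section
/- Let X₁, X₂ be Polish metric spaces, C : X₁ × 𝒫(X₂) → (−∞,+∞] lower semi-continuous, bounded from below, with C(x₁,·) convex for every x₁, let F₁, F₂ be admissible entropy functions, and let μ₁ ∈ ℳ(X₁), μ₂ ∈ ℳ(X₂) be such that the weak optimal entropy transport problem is feasible. Assume either (i) F₁ and F₂ are superlinear, i.e. (F₁)'_∞ = (F₂)'_∞ = +∞, or (ii) X₁ and X₂ are compact and (F₁)'_∞ + (F₂)'_∞ + inf C > 0. Then the infimum ℰ_C(μ₁,μ₂) = inf_{γ∈ℳ(X₁×X₂)} ℰ_C(γ|μ₁,μ₂) is attained by some γ̄ ∈ ℳ(X₁×X₂). -/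
open MeasureTheory Filter Set Topology
open scoped ENNReal NNReal BoundedContinuousFunction

noncomputable section

/-- The "positive part" of an extended real number, as an element of `ℝ≥0∞`. -/
def posE (a : EReal) : ℝ≥0∞ := if a = ⊤ then ⊤ else ENNReal.ofReal a.toReal

/-- Integral of an `EReal`-valued function: positive part minus negative part
(in `EReal`, so that it is always defined). -/
def eIntegral {α : Type*} [MeasurableSpace α] (μ : Measure α) (f : α → EReal) : EReal :=
  ((∫⁻ x, posE (f x) ∂μ : ℝ≥0∞) : EReal) - ((∫⁻ x, posE (-(f x)) ∂μ : ℝ≥0∞) : EReal)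

/-- The recession constant `lim_{s→∞} G(s)/s` (as a `limsup`, which coincides with the
limit for convex functions). -/
def recessionOf (G : ℝ → ℝ≥0∞) : ℝ≥0∞ :=
  Filter.limsup (fun s : ℝ => G s / ENNReal.ofReal s) Filter.atTop

/-- An admissible entropy function: a convex, lower semicontinuous function
`F : [0,∞) → [0,∞]` which is finite at some positive point. -/
structure EntropyFn where
  F : ℝ → ℝ≥0∞
  convex' : ∀ a ∈ Ici (0:ℝ), ∀ b ∈ Ici (0:ℝ), ∀ t : ℝ, 0 ≤ t → t ≤ 1 →
    F (t * a + (1 - t) * b) ≤ ENNReal.ofReal t * F a + ENNReal.ofReal (1 - t) * F b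
  lsc : LowerSemicontinuousOn F (Ici (0:ℝ))
  dom : ∃ s : ℝ, 0 < s ∧ F s ≠ ∞

namespace EntropyFn

/-- The recession constant `F'_∞ = lim_{s→∞} F(s)/s`. -/
def recC (F : EntropyFn) : ℝ≥0∞ := recessionOf F.F

/-- `F` is superlinear if `F'_∞ = ∞`. -/
def Superlinear (F : EntropyFn) : Prop := F.recC = ∞

/-- `F°(φ) := inf_{s ≥ 0} (φ·s + F(s))`, extended to `EReal` arguments. -/
def circ (F : EntropyFn) (φ : EReal) : EReal :=
  ⨅ s : Ici (0:ℝ), φ * ((s : ℝ) : EReal) + ((F.F (s : ℝ) : ℝ≥0∞) : EReal)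

/-- The (interior of the) domain of `F°` is taken inside the set where `F°` is not `-∞`. -/
def circDom (F : EntropyFn) : Set ℝ := {φ : ℝ | F.circ (φ : EReal) ≠ ⊥}

/-- The reverse entropy function `R(r) = r·F(1/r)` for `r > 0`, with `R(0) = F'_∞`. -/
def revF (F : EntropyFn) (r : ℝ) : ℝ≥0∞ :=
  if 0 < r then ENNReal.ofReal r * F.F (1 / r) else F.recC

/-- The Legendre conjugate `R*(ψ) = sup_{s ≥ 0} (s·ψ − R(s))` of the reverse function. -/
def revConj (F : EntropyFn) (ψ : ℝ) : EReal :=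
  ⨆ s : Ici (0:ℝ), (((s : ℝ) * ψ : ℝ) : EReal) - ((F.revF (s : ℝ) : ℝ≥0∞) : EReal)

end EntropyFn

/-- The entropy functional `ℱ(γ|μ) = ∫ F(dγ/dμ) dμ + F'_∞ · γ^⊥(X)`, where
`γ = (dγ/dμ)·μ + γ^⊥` is the Lebesgue decomposition of `γ` with respect to `μ`. -/
def entF {X : Type*} [MeasurableSpace X] (F : EntropyFn) (γ μ : Measure X) : ℝ≥0∞ :=
  (∫⁻ x, F.F ((γ.rnDeriv μ x).toReal) ∂μ) + F.recC * (γ.singularPart μ) Set.univ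

/-- The reverse entropy functional `ℛ(μ|γ) = ∫ R(dμ/dγ) dγ + R'_∞ · μ^⊥(X)`. -/
def revEntF {X : Type*} [MeasurableSpace X] (F : EntropyFn) (μ γ : Measure X) : ℝ≥0∞ :=
  (∫⁻ x, F.revF ((μ.rnDeriv γ x).toReal) ∂γ) + recessionOf F.revF * (μ.singularPart γ) Set.univ

section WOET

variable {X₁ X₂ : Type*} [MeasurableSpace X₁] [MeasurableSpace X₂]

/-- The weak entropy-transport cost
`ℰ_C(γ|μ₁,μ₂) = ℱ₁(γ₁|μ₁) + ℱ₂(γ₂|μ₂) + ∫ C(x₁, γ_{x₁}) dγ₁(x₁)`. -/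
def wCost [StandardBorelSpace X₂] [Nonempty X₂]
    (C : X₁ → ProbabilityMeasure X₂ → EReal) (F₁ F₂ : EntropyFn)
    (μ₁ : Measure X₁) (μ₂ : Measure X₂)
    (γ : Measure (X₁ × X₂)) (hγ : IsFiniteMeasure γ) : EReal :=
  haveI := hγ
  ((entF F₁ γ.fst μ₁ : ℝ≥0∞) : EReal) + ((entF F₂ γ.snd μ₂ : ℝ≥0∞) : EReal) +
    eIntegral γ.fst (fun x₁ => C x₁ ⟨γ.condKernel x₁, inferInstance⟩)

/-- The weak optimal entropy-transport value `ℰ_C(μ₁,μ₂)`. -/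
def wOpt [StandardBorelSpace X₂] [Nonempty X₂]
    (C : X₁ → ProbabilityMeasure X₂ → EReal) (F₁ F₂ : EntropyFn)
    (μ₁ : Measure X₁) (μ₂ : Measure X₂) : EReal :=
  sInf { e : EReal | ∃ (γ : Measure (X₁ × X₂)) (hγ : IsFiniteMeasure γ),
    e = wCost C F₁ F₂ μ₁ μ₂ γ hγ }

variable [TopologicalSpace X₁] [TopologicalSpace X₂]

/-- The dual feasible set `Λ`. -/
def lamSet (C : X₁ → ProbabilityMeasure X₂ → EReal) (F₁ F₂ : EntropyFn) :
    Set ((X₁ →ᵇ ℝ) × (X₂ →ᵇ ℝ)) :=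
  { φ | (∀ x, φ.1 x ∈ interior F₁.circDom) ∧ (∀ x, φ.2 x ∈ interior F₂.circDom) ∧
      ∀ (x₁ : X₁) (p : ProbabilityMeasure X₂),
        ((φ.1 x₁ + ∫ x₂, φ.2 x₂ ∂(p : Measure X₂) : ℝ) : EReal) ≤ C x₁ p }

/-- The dual feasible set `Λ_R`. -/
def lamRSet (C : X₁ → ProbabilityMeasure X₂ → EReal) (F₁ F₂ : EntropyFn) :
    Set ((X₁ →ᵇ ℝ) × (X₂ →ᵇ ℝ)) :=
  { φ | (∃ b : ℝ, ((b : ℝ) : EReal) < ((F₁.F 0 : ℝ≥0∞) : EReal) ∧ ∀ x, φ.1 x ≤ b) ∧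
        (∃ b : ℝ, ((b : ℝ) : EReal) < ((F₂.F 0 : ℝ≥0∞) : EReal) ∧ ∀ x, φ.2 x ≤ b) ∧
        ∀ (x₁ : X₁) (p : ProbabilityMeasure X₂),
          F₁.revConj (φ.1 x₁) + eIntegral (p : Measure X₂) (fun x₂ => F₂.revConj (φ.2 x₂))
            ≤ C x₁ p }

/-- The dual feasible set `Λ_ET` (constraints tested against all pairs of nonnegative finite
measures; on all other signed measures `ET = +∞`, so those constraints are vacuous). -/
def lamETSet [StandardBorelSpace X₂] [Nonempty X₂]
    (C : X₁ → ProbabilityMeasure X₂ → EReal) (F₁ F₂ : EntropyFn) :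
    Set ((X₁ →ᵇ ℝ) × (X₂ →ᵇ ℝ)) :=
  { φ | ∀ (μ₁ : Measure X₁) (μ₂ : Measure X₂), IsFiniteMeasure μ₁ → IsFiniteMeasure μ₂ →
      (((∫ x, φ.1 x ∂μ₁) + ∫ x, φ.2 x ∂μ₂ : ℝ) : EReal) ≤ wOpt C F₁ F₂ μ₁ μ₂ }

/-- The set `Λ_ET^<`. -/
def lamETltSet [StandardBorelSpace X₂] [Nonempty X₂]
    (C : X₁ → ProbabilityMeasure X₂ → EReal) (F₁ F₂ : EntropyFn) :
    Set ((X₁ →ᵇ ℝ) × (X₂ →ᵇ ℝ)) :=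
  { φ ∈ lamETSet C F₁ F₂ |
      (∃ b : ℝ, ((b : ℝ) : EReal) < ((F₁.F 0 : ℝ≥0∞) : EReal) ∧ ∀ x, φ.1 x ≤ b) ∧
      (∃ b : ℝ, ((b : ℝ) : EReal) < ((F₂.F 0 : ℝ≥0∞) : EReal) ∧ ∀ x, φ.2 x ≤ b) }

/-- `R_C φ(x₁) := inf_{p ∈ 𝒫(X₂)} (C(x₁,p) + ∫ φ dp)`. -/
def RCfun (C : X₁ → ProbabilityMeasure X₂ → EReal) (φ : X₂ →ᵇ ℝ) (x₁ : X₁) : EReal :=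
  ⨅ p : ProbabilityMeasure X₂, C x₁ p + ((∫ x₂, φ x₂ ∂(p : Measure X₂) : ℝ) : EReal)

/-- Property (BM) of an admissible entropy function on a space `X`. -/
def HasBM (X : Type*) [TopologicalSpace X] [MeasurableSpace X] (F : EntropyFn) : Prop :=
  ∀ ψ : X →ᵇ ℝ, (∃ b : ℝ, ((b : ℝ) : EReal) < ((F.F 0 : ℝ≥0∞) : EReal) ∧ ∀ x, ψ x ≤ b) →
    ∃ s : X → ℝ, Measurable s ∧ (∃ M : ℝ, ∀ x, |s x| ≤ M) ∧ (∀ x, 0 < s x) ∧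
      ∀ x, ((F.revF (s x) : ℝ≥0∞) : EReal) + F.revConj (ψ x) = ((s x * ψ x : ℝ) : EReal)

end WOET

/-- The functional `ET` extended to pairs of finite signed measures:
it equals `ℰ_C(μ₁,μ₂)` when both arguments are (induced by) nonnegative finite measures,
and `+∞` otherwise. -/
def ETsgn {X₁ X₂ : Type*} [MeasurableSpace X₁] [MeasurableSpace X₂]
    [StandardBorelSpace X₂] [Nonempty X₂]
    (C : X₁ → ProbabilityMeasure X₂ → EReal) (F₁ F₂ : EntropyFn)
    (ν₁ : SignedMeasure X₁) (ν₂ : SignedMeasure X₂) : EReal :=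
  sInf { e : EReal | ∃ (μ₁ : Measure X₁) (h₁ : IsFiniteMeasure μ₁)
      (μ₂ : Measure X₂) (h₂ : IsFiniteMeasure μ₂),
      ν₁ = @Measure.toSignedMeasure X₁ _ μ₁ h₁ ∧ ν₂ = @Measure.toSignedMeasure X₂ _ μ₂ h₂ ∧
      e = wOpt C F₁ F₂ μ₁ μ₂ }

section Martingale

variable {X : Set ℝ}

/-- The martingale condition for a finite measure on `X × X`:
`∫ y dγ_x(y) = x` for `γ₁`-a.e. `x`. -/
def martCond [StandardBorelSpace ↥X] [Nonempty ↥X]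
    (γ : Measure (↥X × ↥X)) (hγ : IsFiniteMeasure γ) : Prop :=
  haveI := hγ
  ∀ᵐ x ∂γ.fst, (∫ y, (y : ℝ) ∂(γ.condKernel x)) = (x : ℝ)

/-- The martingale optimal entropy transport value `ℰ_M(μ₁,μ₂)` (with an `EReal`-valued
cost `c`). -/
def eMart [StandardBorelSpace ↥X] [Nonempty ↥X]
    (c : ↥X → ↥X → EReal) (F₁ F₂ : EntropyFn) (μ₁ μ₂ : Measure ↥X) : EReal :=
  sInf { e : EReal | ∃ (γ : Measure (↥X × ↥X)) (hγ : IsFiniteMeasure γ), martCond γ hγ ∧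
    e = ((entF F₁ γ.fst μ₁ : ℝ≥0∞) : EReal) + ((entF F₂ γ.snd μ₂ : ℝ≥0∞) : EReal) +
        eIntegral γ (fun q => c q.1 q.2) }

/-- The martingale optimal entropy transport value `ℰ_M(μ₁,μ₂)` (with a `[0,∞]`-valued
cost `c`). -/
def eMartNN [StandardBorelSpace ↥X] [Nonempty ↥X]
    (c : ↥X → ↥X → ℝ≥0∞) (F₁ F₂ : EntropyFn) (μ₁ μ₂ : Measure ↥X) : EReal :=
  sInf { e : EReal | ∃ (γ : Measure (↥X × ↥X)) (hγ : IsFiniteMeasure γ), martCond γ hγ ∧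
    e = ((entF F₁ γ.fst μ₁ + entF F₂ γ.snd μ₂ + ∫⁻ q, c q.1 q.2 ∂γ : ℝ≥0∞) : EReal) }

/-- The dual feasible set `Λ_M` for the martingale problem. -/
def lamM (c : ↥X → ↥X → EReal) (F₁ F₂ : EntropyFn) : Set ((↥X →ᵇ ℝ) × (↥X →ᵇ ℝ)) :=
  { φ | (∀ x, φ.1 x ∈ interior F₁.circDom) ∧ (∀ x, φ.2 x ∈ interior F₂.circDom) ∧
      ∃ h : ↥X →ᵇ ℝ, ∀ x₁ x₂ : ↥X,
        ((φ.1 x₁ + φ.2 x₂ + h x₁ * ((x₂ : ℝ) - (x₁ : ℝ)) : ℝ) : EReal) ≤ c x₁ x₂ }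

/-- The perspective function `r·F(θ/r)` with the convention `r·F(θ/r) = θ·F'_∞` for `r = 0`. -/
def perspFn (F : EntropyFn) (r θ : ℝ) : ℝ≥0∞ :=
  if r = 0 then ENNReal.ofReal θ * F.recC else ENNReal.ofReal r * F.F (θ / r)

/-- The homogeneous marginal perspective cost `H(x₁,r₁;x₂,r₂)` (the dependence on
`(x₁,x₂)` is through the value `c = c(x₁,x₂)`). -/
def Hcost (F₁ F₂ : EntropyFn) (c : ℝ≥0∞) (r₁ r₂ : ℝ) : ℝ≥0∞ :=
  if c ≠ ∞ then
    ⨅ θ : Ioi (0:ℝ), perspFn F₁ r₁ (θ : ℝ) + perspFn F₂ r₂ (θ : ℝ) + ENNReal.ofReal (θ : ℝ) * c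
  else F₁.F 0 * ENNReal.ofReal r₁ + F₂.F 0 * ENNReal.ofReal r₂

/-- The functional `ℋ(μ₁,μ₂|γ)`. -/
def hMargFun (F₁ F₂ : EntropyFn) (c : ↥X → ↥X → ℝ≥0∞) (μ₁ μ₂ : Measure ↥X)
    (γ : Measure (↥X × ↥X)) : ℝ≥0∞ :=
  (∫⁻ q, Hcost F₁ F₂ (c q.1 q.2) ((μ₁.rnDeriv γ.fst q.1).toReal)
      ((μ₂.rnDeriv γ.snd q.2).toReal) ∂γ)
    + F₁.F 0 * (μ₁.singularPart γ.fst) Set.univ + F₂.F 0 * (μ₂.singularPart γ.snd) Set.univ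

/-- The functional `ℛ(μ₁,μ₂|γ)`. -/
def rMargFun (F₁ F₂ : EntropyFn) (c : ↥X → ↥X → ℝ≥0∞) (μ₁ μ₂ : Measure ↥X)
    (γ : Measure (↥X × ↥X)) : ℝ≥0∞ :=
  revEntF F₁ μ₁ γ.fst + revEntF F₂ μ₂ γ.snd + ∫⁻ q, c q.1 q.2 ∂γ

/-- The first `p`-homogeneous marginal of a measure on `Y × Y`, `Y = X × [0,∞)`. -/
def hMarg1 (p : ℝ) (α : Measure ((↥X × ℝ≥0) × (↥X × ℝ≥0))) : Measure ↥X :=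
  Measure.map (fun q => q.1.1) (α.withDensity fun q => (q.1.2 : ℝ≥0∞) ^ p)

/-- The second `p`-homogeneous marginal of a measure on `Y × Y`, `Y = X × [0,∞)`. -/
def hMarg2 (p : ℝ) (α : Measure ((↥X × ℝ≥0) × (↥X × ℝ≥0))) : Measure ↥X :=
  Measure.map (fun q => q.2.1) (α.withDensity fun q => (q.2.2 : ℝ≥0∞) ^ p)

/-- Membership in the homogeneous constraint set `ℋ^p_{M,≤}(μ₁,μ₂)`. -/
def memHpM (p : ℝ) (μ₁ μ₂ : Measure ↥X) (α : Measure ((↥X × ℝ≥0) × (↥X × ℝ≥0))) : Prop :=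
  IsFiniteMeasure α ∧ (∫⁻ q, (q.1.2 : ℝ≥0∞) ^ p + (q.2.2 : ℝ≥0∞) ^ p ∂α) ≠ ∞ ∧
    hMarg1 p α ≤ μ₁ ∧ hMarg2 p α ≤ μ₂ ∧
    ∀ h : ↥X →ᵇ ℝ, (∫ q, h q.1.1 * ((q.2.1 : ℝ) - (q.1.1 : ℝ)) ∂α) = 0

end Martingale

/-!
Direct method. The affine minorants `s ↦ a s - b` of an entropy function give upper bounds for the
mass and for the tails of the marginals of a plan in terms of its cost, so that sublevel sets of
the cost are tight. Lower semicontinuity is read off from dual formulas: the entropy is a supremum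
of functionals `γ ↦ ∫ a dγ - ∫ b dμ`, and the weak transport cost is a supremum of functionals
`γ ↦ ∫ ψ dγ`. In both cases a pointwise supremum is exchanged with an integral, which is possible
because the class of test functions is stable under mixing with continuous weights.

The formula for the transport cost needs minorants of `D(x, ·)` that persist for nearby `x`, and
these exist if `D(x, ·)` is coercive uniformly in `x`. Adding to the cost a small multiple of a
moment with compact sublevel sets enforces this; integrated against a plan the moment depends only
on the second marginal, where it stays bounded on the sublevel sets of the full functional, so the
perturbation can be sent to zero.
-/

section AffineMinorant

variable {V : Type*} [AddCommGroup V] [Module ℝ V] [TopologicalSpace V]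
  [IsTopologicalAddGroup V] [ContinuousSMul ℝ V] [LocallyConvexSpace ℝ V]

lemma exists_separating_hyperplane_of_eventually_le {A : Set (V × ℝ)} (hA : Convex ℝ A) {v₀ : V}
    {r : ℝ} (hr : ∀ᶠ v in 𝓝 v₀, ∀ s, (v, s) ∈ A → r ≤ s) :
    ∃ (l : V →L[ℝ] ℝ) (α u : ℝ), 0 ≤ α ∧ (∀ s < r, l v₀ + α * s < u) ∧
      ∀ a ∈ A, u ≤ l a.1 + α * a.2 := by
  obtain ⟨U, ⟨hUv, hUconv⟩, hU⟩ := (LocallyConvexSpace.convex_basis (𝕜 := ℝ) v₀).eventually_iff.1 hr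
  have hdisj : Disjoint (interior U ×ˢ Iio r) A := by
    rw [Set.disjoint_left]
    rintro ⟨v, s⟩ ⟨hv, hs⟩ ha
    exact (hU (interior_subset hv) s ha).not_gt hs
  obtain ⟨f, u, hlt, hle⟩ := geometric_hahn_banach_open
    (hUconv.interior.prod (convex_Iio r)) (isOpen_interior.prod isOpen_Iio) hA hdisj
  have hf : ∀ v s, f (v, s) = f (v, 0) + f (0, 1) * s := fun v s => by
    calc f (v, s) = f ((v, 0) + s • (0, 1)) := by simp
      _ = f (v, 0) + f (0, 1) * s := by rw [map_add, map_smul, smul_eq_mul, mul_comm]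
  have hbelow : ∀ s < r, f (v₀, 0) + f (0, 1) * s < u := fun s hs => by
    rw [← hf]
    exact hlt _ ⟨mem_interior_iff_mem_nhds.2 hUv, hs⟩
  refine ⟨f.comp (.inl ℝ V ℝ), f (0, 1), u, ?_, hbelow, fun a ha => ?_⟩
  · by_contra! hneg
    have hbot : Tendsto (fun s => f (v₀, 0) + f (0, 1) * s) atBot atTop :=
      tendsto_atTop_add_const_left _ _ (tendsto_id.const_mul_atBot_of_neg hneg)
    obtain ⟨s, hus, hsr⟩ := ((hbot.eventually_ge_atTop u).and (eventually_lt_atBot r)).exists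
    exact (hbelow s hsr).not_ge hus
  · have hua := hle a ha
    rwa [← Prod.mk.eta (p := a), hf] at hua

lemma exists_affine_minorant_of_convex {A : Set (V × ℝ)} (hA : Convex ℝ A) {K : ℝ}
    (hK : ∀ a ∈ A, K ≤ a.2) {v₀ : V} {r : ℝ} (hr : ∀ᶠ v in 𝓝 v₀, ∀ s, (v, s) ∈ A → r ≤ s)
    {r' : ℝ} (hr' : r' < r) :
    ∃ (l : V →L[ℝ] ℝ) (b : ℝ), (∀ a ∈ A, l a.1 + b ≤ a.2) ∧ r' ≤ l v₀ + b := by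
  obtain ⟨l, α, u, hα, hlt, hle⟩ := exists_separating_hyperplane_of_eventually_le hA hr
  rcases hα.eq_or_lt with rfl | hα
  · -- A vertical hyperplane is tilted: multiples of `u - l` are added to the constant `K`.
    have hgap : 0 < u - l v₀ := by linarith [hlt r' hr']
    obtain ⟨n, hn⟩ := exists_nat_ge ((r' - K) / (u - l v₀))
    rw [div_le_iff₀ hgap] at hn
    refine ⟨-((n : ℝ) • l), K + n * u, fun a ha => ?_, ?_⟩
    · have : 0 ≤ n * (l a.1 - u) := mul_nonneg n.cast_nonneg (by linarith [hle a ha])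
      simp only [neg_apply, smul_apply, smul_eq_mul]
      linarith [hK a ha]
    · simp only [neg_apply, smul_apply, smul_eq_mul]
      linarith
  · have hval : ∀ v, (-(α⁻¹ • l)) v + u / α = (u - l v) / α := fun v => by
      simp only [neg_apply, smul_apply, smul_eq_mul]
      ring
    refine ⟨-(α⁻¹ • l), u / α, fun a ha => ?_, ?_⟩
    · rw [hval, div_le_iff₀ hα]
      linarith [hle a ha]
    · rw [hval, le_div_iff₀ hα]
      linarith [hlt r' hr']

variable {Q : Type*} [TopologicalSpace Q]

lemma exists_affine_minorant_gt {T : Q → V} (hT : IsInducing T) {f : Q → ℝ≥0∞} {p₀ : Q}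
    (hf : LowerSemicontinuousAt f p₀)
    (hconv : ∀ p q (t : ℝ), 0 ≤ t → t ≤ 1 → ∃ m, T m = t • T p + (1 - t) • T q ∧
      f m ≤ ENNReal.ofReal t * f p + ENNReal.ofReal (1 - t) * f q)
    {c : ℝ≥0∞} (hc : c < f p₀) :
    ∃ (l : V →L[ℝ] ℝ) (b : ℝ), (∀ q, ENNReal.ofReal (l (T q) + b) ≤ f q) ∧
      c < ENNReal.ofReal (l (T p₀) + b) := by
  obtain ⟨r', hcr', hr'p⟩ := ENNReal.lt_iff_exists_nnreal_btwn.1 hc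
  obtain ⟨r, hr'r, hrp⟩ := ENNReal.lt_iff_exists_nnreal_btwn.1 hr'p
  let A : Set (V × ℝ) := {a | 0 ≤ a.2 ∧ ∃ q, T q = a.1 ∧ f q ≤ ENNReal.ofReal a.2}
  have hA : Convex ℝ A := by
    rintro a ⟨ha, p, hp, hfp⟩ a' ⟨ha', q, hq, hfq⟩ t t' ht ht' htt'
    obtain rfl : t' = 1 - t := by linarith
    obtain ⟨m, hm, hfm⟩ := hconv p q t ht (by linarith)
    refine ⟨add_nonneg (mul_nonneg ht ha) (mul_nonneg ht' ha'), m, by rw [hm, hp, hq]; rfl, ?_⟩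
    calc f m ≤ ENNReal.ofReal t * ENNReal.ofReal a.2
          + ENNReal.ofReal (1 - t) * ENNReal.ofReal a'.2 := hfm.trans (by gcongr)
      _ = ENNReal.ofReal (t * a.2 + (1 - t) * a'.2) := by
        rw [← ENNReal.ofReal_mul ht, ← ENNReal.ofReal_mul ht',
          ← ENNReal.ofReal_add (mul_nonneg ht ha) (mul_nonneg ht' ha')]
  have hnear : ∀ᶠ v in 𝓝 (T p₀), ∀ s, (v, s) ∈ A → (r : ℝ) ≤ s := by
    have hev := hf r hrp
    rw [hT.nhds_eq_comap, eventually_comap] at hev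
    filter_upwards [hev] with v hv s
    rintro ⟨-, q, hq, hfq⟩
    have hrs := (hv q hq).trans_le hfq
    rw [← ENNReal.ofReal_coe_nnreal] at hrs
    exact ((ENNReal.ofReal_lt_ofReal_iff_of_nonneg r.2).1 hrs).le
  obtain ⟨l, b, hle, hge⟩ := exists_affine_minorant_of_convex hA (K := 0) (fun a ha => ha.1) hnear
    (r' := r') (by exact_mod_cast hr'r)
  refine ⟨l, b, fun q => ?_, hcr'.trans_le ?_⟩
  · rcases eq_or_ne (f q) ⊤ with hq | hq
    · simp [hq]
    · exact ENNReal.ofReal_le_of_le_toReal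
        (hle (T q, (f q).toReal) ⟨ENNReal.toReal_nonneg, q, rfl, (ENNReal.ofReal_toReal hq).ge⟩)
  · rw [← ENNReal.ofReal_coe_nnreal]
    exact ENNReal.ofReal_le_ofReal hge

end AffineMinorant

section Mixable

variable {X : Type*} [TopologicalSpace X] [MeasurableSpace X] {μ : Measure X}

/-- A continuous function with values in the unit interval as a bounded continuous function. -/
def unitIntervalBCF {X : Type*} [TopologicalSpace X] (η : C(X, unitInterval)) : X →ᵇ ℝ :=
  .mkOfBound ⟨fun x => η x, by fun_prop⟩ 1 fun x y => Real.dist_le_of_mem_Icc_01 (η x).2 (η y).2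

@[simp]
lemma unitIntervalBCF_apply {X : Type*} [TopologicalSpace X] (η : C(X, unitInterval)) (x : X) :
    unitIntervalBCF η x = η x :=
  rfl

/-- A class of `μ`-integrable functions is mixable if it contains `η g₁ + (1 - η) g₂` for all
members `g₁`, `g₂` and every continuous weight `η` with values in `[0, 1]`. This is a topological
variant of decomposability, which asks for the same with indicator functions `η`, and it is what
makes it possible to exchange the supremum over the class with the integral. -/
structure IsMixable (μ : Measure X) (G : Set (X → ℝ)) : Prop where
  integrable : ∀ g ∈ G, Integrable g μ
  mix : ∀ g₁ ∈ G, ∀ g₂ ∈ G, ∀ η : C(X, unitInterval),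
    (fun x => (η x : ℝ) * g₁ x + (1 - η x) * g₂ x) ∈ G

/-- `IsL1Limit μ G f` says that `f` belongs to the closure of `G` in `L¹(μ)`. -/
def IsL1Limit (μ : Measure X) (G : Set (X → ℝ)) (f : X → ℝ) : Prop :=
  Integrable f μ ∧ ∀ ε > 0, ∃ g ∈ G, ∫ x, |g x - f x| ∂μ ≤ ε

lemma abs_projIcc_mix_sub_max_le (a b u : ℝ) :
    |projIcc (0 : ℝ) 1 zero_le_one u * a + (1 - projIcc (0 : ℝ) 1 zero_le_one u) * b - max a b|
      ≤ |a - b| * |(if b < a then 1 else 0) - u| := by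
  set χ : ℝ := if b < a then 1 else 0 with hχ
  have hproj : (projIcc (0 : ℝ) 1 zero_le_one χ : ℝ) = χ := by
    split_ifs at hχ <;> simp [hχ]
  have hmax : max a b = b + χ * (a - b) := by
    split_ifs at hχ with hab
    · simp [hχ, hab.le]
    · simp [hχ, not_lt.1 hab]
  calc |projIcc (0 : ℝ) 1 zero_le_one u * a + (1 - projIcc (0 : ℝ) 1 zero_le_one u) * b - max a b|
      = |a - b| * |(projIcc (0 : ℝ) 1 zero_le_one χ : ℝ) - projIcc (0 : ℝ) 1 zero_le_one u| := by
        rw [hmax, hproj, ← abs_mul, ← abs_neg]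
        ring_nf
    _ ≤ |a - b| * |χ - u| :=
        mul_le_mul_of_nonneg_left (abs_projIcc_sub_projIcc zero_le_one) (abs_nonneg _)

lemma exists_integral_abs_mix_sub_max_le [TopologicalSpace.PseudoMetrizableSpace X] [BorelSpace X]
    {g₁ g₂ : X → ℝ} (h₁ : Integrable g₁ μ) (h₂ : Integrable g₂ μ) {ε : ℝ} (hε : 0 < ε) :
    ∃ η : C(X, unitInterval),
      ∫ x, |η x * g₁ x + (1 - η x) * g₂ x - max (g₁ x) (g₂ x)| ∂μ ≤ ε := by
  -- The indicator of `{g₂ < g₁}` mixes to the maximum; it is approximated in `L¹(|g₁ - g₂| μ)`.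
  have hdens := (h₁.sub h₂).aestronglyMeasurable.enorm
  have hfin : ∀ᵐ x ∂μ, ‖(g₁ - g₂) x‖ₑ < ∞ := .of_forall fun x => enorm_lt_top
  set ν := μ.withDensity fun x => ‖(g₁ - g₂) x‖ₑ with hν
  have : IsFiniteMeasure ν := isFiniteMeasure_withDensity (h₁.sub h₂).2.ne
  let A : Set X := {x | g₂ x < g₁ x}
  have hA : NullMeasurableSet A ν :=
    (nullMeasurableSet_lt h₂.aemeasurable h₁.aemeasurable).mono_ac
      (withDensity_absolutelyContinuous _ _)
  have hind : Integrable (A.indicator fun _ => (1 : ℝ)) ν :=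
    (integrable_const 1).indicator₀ hA
  obtain ⟨φ, hφε, hφ⟩ := hind.exists_boundedContinuous_integral_sub_le hε
  rw [hν, integral_withDensity_eq_integral_toReal_smul₀ hdens hfin] at hφε
  have hbound := (integrable_withDensity_iff_integrable_smul₀' hdens hfin).1 (hind.sub hφ).norm
  refine ⟨⟨fun x => projIcc 0 1 zero_le_one (φ x), by fun_prop⟩, le_trans ?_ hφε⟩
  refine integral_mono_of_nonneg (.of_forall fun x => abs_nonneg _) hbound (.of_forall fun x => ?_)
  have hx := abs_projIcc_mix_sub_max_le (g₁ x) (g₂ x) (φ x)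
  simpa [toReal_enorm, A, indicator_apply] using hx

lemma IsL1Limit.of_mem {G : Set (X → ℝ)} (hG : IsMixable μ G) {g : X → ℝ} (hg : g ∈ G) :
    IsL1Limit μ G g :=
  ⟨hG.integrable g hg, fun ε hε => ⟨g, hg, by simpa using hε.le⟩⟩

lemma IsL1Limit.sup [TopologicalSpace.PseudoMetrizableSpace X] [BorelSpace X] {G : Set (X → ℝ)}
    (hG : IsMixable μ G) {f₁ f₂ : X → ℝ} (h₁ : IsL1Limit μ G f₁) (h₂ : IsL1Limit μ G f₂) :
    IsL1Limit μ G (f₁ ⊔ f₂) := by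
  refine ⟨h₁.1.sup h₂.1, fun ε hε => ?_⟩
  obtain ⟨g₁, hg₁, hgf₁⟩ := h₁.2 (ε / 3) (by positivity)
  obtain ⟨g₂, hg₂, hgf₂⟩ := h₂.2 (ε / 3) (by positivity)
  have i₁ := hG.integrable g₁ hg₁
  have i₂ := hG.integrable g₂ hg₂
  obtain ⟨η, hη⟩ := exists_integral_abs_mix_sub_max_le i₁ i₂ (ε := ε / 3) (by positivity)
  have hmem := hG.mix g₁ hg₁ g₂ hg₂ η
  refine ⟨_, hmem, ?_⟩
  have imix := ((hG.integrable _ hmem).sub (i₁.sup i₂)).abs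
  calc ∫ x, |η x * g₁ x + (1 - η x) * g₂ x - max (f₁ x) (f₂ x)| ∂μ
      ≤ ∫ x, (|η x * g₁ x + (1 - η x) * g₂ x - max (g₁ x) (g₂ x)|
          + (|g₁ x - f₁ x| + |g₂ x - f₂ x|)) ∂μ := by
        refine integral_mono ((hG.integrable _ hmem).sub (h₁.1.sup h₂.1)).abs
          (imix.add ((i₁.sub h₁.1).abs.add (i₂.sub h₂.1).abs)) fun x => ?_
        refine (abs_sub_le _ (max (g₁ x) (g₂ x)) _).trans (add_le_add_right ?_ _)
        exact (abs_max_sub_max_le_max _ _ _ _).trans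
          (max_le_add_of_nonneg (abs_nonneg _) (abs_nonneg _))
    _ = (∫ x, |η x * g₁ x + (1 - η x) * g₂ x - max (g₁ x) (g₂ x)| ∂μ)
          + (∫ x, |g₁ x - f₁ x| ∂μ + ∫ x, |g₂ x - f₂ x| ∂μ) := by
        refine (integral_add imix ((i₁.sub h₁.1).abs.add (i₂.sub h₂.1).abs)).trans ?_
        exact congrArg _ (integral_add (i₁.sub h₁.1).abs (i₂.sub h₂.1).abs)
    _ ≤ ε := by linarith

lemma IsL1Limit.partialSups [TopologicalSpace.PseudoMetrizableSpace X] [BorelSpace X]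
    {G : Set (X → ℝ)} (hG : IsMixable μ G) {g : ℕ → X → ℝ} (hg : ∀ n, g n ∈ G) (n : ℕ) :
    IsL1Limit μ G (_root_.partialSups g n) := by
  induction n with
  | zero => exact partialSups_zero g ▸ .of_mem hG (hg 0)
  | succ n ih => exact partialSups_succ g n ▸ ih.sup hG (.of_mem hG (hg (n + 1)))

lemma IsL1Limit.ofReal_integral_le {G : Set (X → ℝ)} (hG : IsMixable μ G) {f : X → ℝ}
    (hf : IsL1Limit μ G f) :
    ENNReal.ofReal (∫ x, f x ∂μ) ≤ ⨆ g ∈ G, ENNReal.ofReal (∫ x, g x ∂μ) := by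
  refine ENNReal.le_of_forall_pos_le_add fun ε hε _ => ?_
  obtain ⟨g, hg, hgf⟩ := hf.2 ε hε
  have hle : ∫ x, f x ∂μ ≤ ∫ x, g x ∂μ + ε := by
    have hdist := (norm_integral_le_integral_norm fun x => g x - f x).trans hgf
    rw [integral_sub (hG.integrable g hg) hf.1, Real.norm_eq_abs] at hdist
    linarith [neg_le_abs (∫ x, g x ∂μ - ∫ x, f x ∂μ)]
  calc ENNReal.ofReal (∫ x, f x ∂μ)
      ≤ ENNReal.ofReal (∫ x, g x ∂μ) + ENNReal.ofReal ε :=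
        (ENNReal.ofReal_le_ofReal hle).trans ENNReal.ofReal_add_le
    _ ≤ (⨆ g ∈ G, ENNReal.ofReal (∫ x, g x ∂μ)) + ε := by
        rw [ENNReal.ofReal_coe_nnreal]
        gcongr
        exact le_iSup₂ (f := fun g _ => ENNReal.ofReal (∫ x, g x ∂μ)) g hg

lemma IsMixable.lintegral_iSup_le [TopologicalSpace.PseudoMetrizableSpace X] [BorelSpace X]
    {G : Set (X → ℝ)} (hG : IsMixable μ G) (h0 : 0 ∈ G) {g : ℕ → X → ℝ} (hg : ∀ n, g n ∈ G) :
    ∫⁻ x, ⨆ n, ENNReal.ofReal (g n x) ∂μ ≤ ⨆ g ∈ G, ENNReal.ofReal (∫ x, g x ∂μ) := by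
  have hlim : ∀ n, IsL1Limit μ G (partialSups g n ⊔ 0) := fun n =>
    (IsL1Limit.partialSups hG hg n).sup hG (.of_mem hG h0)
  have hmono : Monotone fun n x => ENNReal.ofReal ((partialSups g n ⊔ 0) x) := fun m n hmn x =>
    ENNReal.ofReal_le_ofReal (sup_le_sup_right ((partialSups g).monotone hmn) 0 x)
  calc ∫⁻ x, ⨆ n, ENNReal.ofReal (g n x) ∂μ
      ≤ ∫⁻ x, ⨆ n, ENNReal.ofReal ((partialSups g n ⊔ 0) x) ∂μ :=
        lintegral_mono fun x => iSup_mono fun n =>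
          ENNReal.ofReal_le_ofReal ((le_partialSups g n).trans le_sup_left x)
    _ = ⨆ n, ∫⁻ x, ENNReal.ofReal ((partialSups g n ⊔ 0) x) ∂μ :=
        lintegral_iSup' (fun n => (hlim n).1.aemeasurable.ennreal_ofReal)
          (.of_forall fun x m n hmn => hmono hmn x)
    _ ≤ ⨆ g ∈ G, ENNReal.ofReal (∫ x, g x ∂μ) := iSup_le fun n => by
        rw [← ofReal_integral_eq_lintegral_ofReal (hlim n).1 (.of_forall fun x => le_sup_right)]
        exact (hlim n).ofReal_integral_le hG

end Mixable

lemma iSup_comp_eq_of_denseRange {ι T L : Type*} [TopologicalSpace T] [CompleteLinearOrder L]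
    [TopologicalSpace L] [ClosedIicTopology L] {u : ι → T} (hu : DenseRange u) {f : T → L}
    (hf : Continuous f) : ⨆ i, f (u i) = ⨆ t, f t := by
  rw [← Dense.ciSup' hu hf, iSup_range' f u]

namespace EntropyFn

variable (F : EntropyFn)

/-- The pairs `(a, b)` for which the affine function `s ↦ a s - b` lies below `F` on `[0, ∞)`.
Where it is negative this is no constraint, because `F` takes values in `[0, ∞]`. -/
def affineMinorants : Set (ℝ × ℝ) :=
  {p | ∀ s, 0 ≤ s → ENNReal.ofReal (p.1 * s - p.2) ≤ F.F s}

variable {F}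

lemma zero_mem_affineMinorants : (0, 0) ∈ F.affineMinorants := fun _ _ => by simp

lemma convex_affineMinorants : Convex ℝ F.affineMinorants := by
  intro p hp q hq t t' ht ht' htt' s hs
  calc ENNReal.ofReal ((t * p.1 + t' * q.1) * s - (t * p.2 + t' * q.2))
      = ENNReal.ofReal (t • (p.1 * s - p.2) + t' • (q.1 * s - q.2)) := by
        simp only [smul_eq_mul]
        ring_nf
    _ ≤ ENNReal.ofReal (max (p.1 * s - p.2) (q.1 * s - q.2)) :=
        ENNReal.ofReal_le_ofReal (Convex.combo_le_max _ _ ht ht' htt')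
    _ ≤ F.F s := ENNReal.ofReal_max _ _ ▸ max_le (hp s hs) (hq s hs)

variable (F)

lemma F_eq_iSup {s₀ : ℝ} (hs₀ : 0 ≤ s₀) :
    F.F s₀ = ⨆ p : F.affineMinorants, ENNReal.ofReal (p.1.1 * s₀ - p.1.2) := by
  refine le_antisymm (le_of_forall_lt fun c hc => ?_) (iSup_le fun p => p.2 s₀ hs₀)
  have hlsc : LowerSemicontinuous fun s : Ici (0 : ℝ) => F.F s :=
    lowerSemicontinuous_restrict_iff.2 F.lsc
  obtain ⟨l, b, hle, hlt⟩ := exists_affine_minorant_gt (p₀ := ⟨s₀, hs₀⟩) IsInducing.subtypeVal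
    (hlsc _) (fun p q t ht ht' =>
      ⟨⟨t * p + (1 - t) * q, add_nonneg (mul_nonneg ht p.2) (mul_nonneg (by linarith) q.2)⟩, rfl,
        F.convex' p p.2 q q.2 t ht ht'⟩) hc
  have hl : ∀ s, l s = l 1 * s := fun s => by
    simpa [mul_comm] using l.map_smul s 1
  refine lt_iSup_iff.2 ⟨⟨(l 1, -b), fun s hs => ?_⟩, ?_⟩
  · simpa [hl s] using hle ⟨s, hs⟩
  · simpa [hl s₀] using hlt

lemma F_le_of_slopes_le {t : ℝ≥0} (ht : ∀ p ∈ F.affineMinorants, ENNReal.ofReal p.1 ≤ t)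
    {s₀ s : ℝ} (hs₀ : 0 ≤ s₀) (hF₀ : F.F s₀ ≠ ∞) (hs : s₀ ≤ s) :
    F.F s ≤ ENNReal.ofReal (t * s + (F.F s₀).toReal) := by
  rw [F.F_eq_iSup (hs₀.trans hs)]
  refine iSup_le fun p => ENNReal.ofReal_le_ofReal ?_
  have hslope : p.1.1 ≤ t := (ENNReal.ofReal_le_iff_le_toReal (by simp)).1 (ht p p.2)
  have hval := (ENNReal.ofReal_le_iff_le_toReal hF₀).1 (p.2 s₀ hs₀)
  linarith [mul_le_mul_of_nonneg_right hslope (sub_nonneg.2 hs), mul_nonneg t.coe_nonneg hs₀]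

lemma recC_eq_iSup : F.recC = ⨆ p : F.affineMinorants, ENNReal.ofReal p.1.1 := by
  have hlim : ∀ a b : ℝ,
      Tendsto (fun s => ENNReal.ofReal (a + b / s)) atTop (𝓝 (ENNReal.ofReal a)) := fun a b => by
    simpa using ENNReal.tendsto_ofReal
      (tendsto_const_nhds (x := a) |>.add (tendsto_const_nhds (x := b) |>.div_atTop tendsto_id))
  apply le_antisymm
  · rcases eq_or_ne (⨆ p : F.affineMinorants, ENNReal.ofReal p.1.1) ⊤ with htop | htop
    · exact htop ▸ le_top
    lift (⨆ p : F.affineMinorants, ENNReal.ofReal p.1.1) to ℝ≥0 using htop with t ht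
    obtain ⟨s₀, hs₀, hF₀⟩ := F.dom
    rw [recC, recessionOf, ← ENNReal.ofReal_coe_nnreal, ← (hlim t (F.F s₀).toReal).limsup_eq]
    refine limsup_le_limsup ?_
    filter_upwards [eventually_ge_atTop s₀] with s hs
    have hs' := hs₀.trans_le hs
    rw [ENNReal.div_le_iff (by simpa using hs') (by simp), ← ENNReal.ofReal_mul' hs'.le, add_mul,
      div_mul_cancel₀ _ hs'.ne']
    refine F.F_le_of_slopes_le (fun p hp => ?_) hs₀.le hF₀ hs
    exact ht ▸ le_iSup (fun p : F.affineMinorants => ENNReal.ofReal p.1.1) ⟨p, hp⟩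
  · refine iSup_le fun ⟨⟨a, b⟩, hab⟩ => ?_
    rw [recC, recessionOf, ← (hlim a (-b)).limsup_eq]
    refine limsup_le_limsup ?_
    filter_upwards [eventually_gt_atTop 0] with s hs
    rw [ENNReal.le_div_iff_mul_le (by simp [hs]) (by simp), ← ENNReal.ofReal_mul' hs.le, add_mul,
      div_mul_cancel₀ _ hs.ne', ← sub_eq_add_neg]
    exact hab s hs.le

lemma exists_seq_affineMinorants : ∃ p : ℕ → F.affineMinorants,
    (∀ s, 0 ≤ s → F.F s = ⨆ n, ENNReal.ofReal ((p n).1.1 * s - (p n).1.2)) ∧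
      F.recC = ⨆ n, ENNReal.ofReal (p n).1.1 := by
  have : Nonempty F.affineMinorants := ⟨_, zero_mem_affineMinorants⟩
  have hdense := TopologicalSpace.denseRange_denseSeq F.affineMinorants
  refine ⟨TopologicalSpace.denseSeq F.affineMinorants, fun s hs => ?_, ?_⟩
  · exact (F.F_eq_iSup hs).trans (iSup_comp_eq_of_denseRange hdense
      (f := fun p : F.affineMinorants => ENNReal.ofReal (p.1.1 * s - p.1.2))
      (ENNReal.continuous_ofReal.comp (by fun_prop))).symm
  · exact F.recC_eq_iSup.trans (iSup_comp_eq_of_denseRange hdense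
      (f := fun p : F.affineMinorants => ENNReal.ofReal p.1.1)
      (ENNReal.continuous_ofReal.comp (by fun_prop))).symm

end EntropyFn

lemma ofReal_integral_le_lintegral_ofReal {X : Type*} [MeasurableSpace X] {μ : Measure X}
    {f : X → ℝ} (hf : Integrable f μ) :
    ENNReal.ofReal (∫ x, f x ∂μ) ≤ ∫⁻ x, ENNReal.ofReal (f x) ∂μ := by
  rw [integral_eq_lintegral_pos_part_sub_lintegral_neg_part hf]
  exact (ENNReal.ofReal_le_ofReal (sub_le_self _ ENNReal.toReal_nonneg)).trans
    ENNReal.ofReal_toReal_le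

section Entropy

variable {X : Type*} [MeasurableSpace X] {γ μ : Measure X}

open Classical in
/-- The function which is `u` on a set carrying the singular part of `γ` and `v` on a set carrying
`μ`; it turns the two terms of an entropy functional into a single integral. -/
def singularPiecewise {β : Type*} (γ μ : Measure X) (u v : X → β) : X → β :=
  (Measure.mutuallySingular_singularPart γ μ).nullSet.piecewise v u

lemma singularPiecewise_ae_eq_left {β : Type*} (u v : X → β) :
    singularPiecewise γ μ u v =ᵐ[γ.singularPart μ] u := by
  have hN := Measure.MutuallySingular.measure_nullSet (Measure.mutuallySingular_singularPart γ μ)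
  filter_upwards [measure_eq_zero_iff_ae_notMem.1 hN] with x hx
  simp [singularPiecewise, hx]

lemma singularPiecewise_ae_eq_right {β : Type*} (u v : X → β) :
    singularPiecewise γ μ u v =ᵐ[μ] v := by
  have hN := Measure.MutuallySingular.measure_compl_nullSet
    (Measure.mutuallySingular_singularPart γ μ)
  filter_upwards [measure_eq_zero_iff_ae_notMem.1 hN] with x hx
  simp [singularPiecewise, not_notMem.1 hx]

lemma entF_eq_lintegral (F : EntropyFn) (γ μ : Measure X) :
    entF F γ μ = ∫⁻ x, singularPiecewise γ μ (fun _ => F.recC)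
      (fun x => F.F (γ.rnDeriv μ x).toReal) x ∂(μ + γ.singularPart μ) := by
  rw [lintegral_add_measure, lintegral_congr_ae (singularPiecewise_ae_eq_left _ _),
    lintegral_congr_ae (singularPiecewise_ae_eq_right _ _), lintegral_const, entF]

/-- The integrand whose integral with respect to `μ + γ.singularPart μ` is `∫ a dγ - ∫ b dμ`. -/
def dualIntegrand (γ μ : Measure X) (a b : X → ℝ) : X → ℝ :=
  singularPiecewise γ μ a fun x => a x * (γ.rnDeriv μ x).toReal - b x

lemma dualIntegrand_ae_eq_singularPart (a b : X → ℝ) :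
    dualIntegrand γ μ a b =ᵐ[γ.singularPart μ] a :=
  singularPiecewise_ae_eq_left _ _

lemma dualIntegrand_ae_eq (a b : X → ℝ) :
    dualIntegrand γ μ a b =ᵐ[μ] fun x => a x * (γ.rnDeriv μ x).toReal - b x :=
  singularPiecewise_ae_eq_right _ _

lemma integral_dualIntegrand [SigmaFinite γ] [SigmaFinite μ] {a b : X → ℝ} (ha : Integrable a γ)
    (hb : Integrable b μ) : Integrable (dualIntegrand γ μ a b) (μ + γ.singularPart μ) ∧
      ∫ x, dualIntegrand γ μ a b x ∂(μ + γ.singularPart μ) = ∫ x, a x ∂γ - ∫ x, b x ∂μ := by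
  have hdecomp := γ.haveLebesgueDecomposition_add μ
  have hac : Integrable a (μ.withDensity (γ.rnDeriv μ)) :=
    ha.mono_measure (γ.withDensity_rnDeriv_le μ)
  have hsing : Integrable a (γ.singularPart μ) := ha.mono_measure (γ.singularPart_le μ)
  have hmul : Integrable (fun x => a x * (γ.rnDeriv μ x).toReal) μ := by
    simpa only [smul_eq_mul, mul_comm] using (integrable_withDensity_iff_integrable_smul'
      (γ.measurable_rnDeriv μ) (γ.rnDeriv_lt_top μ)).1 hac
  have hac_eq : ∫ x, a x ∂(μ.withDensity (γ.rnDeriv μ)) = ∫ x, a x * (γ.rnDeriv μ x).toReal ∂μ := by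
    simpa only [smul_eq_mul, mul_comm] using integral_withDensity_eq_integral_toReal_smul
      (γ.measurable_rnDeriv μ) (γ.rnDeriv_lt_top μ) a
  have hint_μ : Integrable (dualIntegrand γ μ a b) μ :=
    (hmul.sub hb).congr (dualIntegrand_ae_eq a b).symm
  have hint_σ : Integrable (dualIntegrand γ μ a b) (γ.singularPart μ) :=
    hsing.congr (dualIntegrand_ae_eq_singularPart a b).symm
  have hγ : ∫ x, a x ∂γ = ∫ x, a x ∂(γ.singularPart μ) + ∫ x, a x * (γ.rnDeriv μ x).toReal ∂μ := by
    rw [← hac_eq, ← integral_add_measure hsing hac, ← hdecomp]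
  refine ⟨hint_μ.add_measure hint_σ, ?_⟩
  rw [integral_add_measure hint_μ hint_σ, integral_congr_ae (dualIntegrand_ae_eq a b),
    integral_congr_ae (dualIntegrand_ae_eq_singularPart a b), integral_sub hmul hb, hγ]
  ring

lemma ofReal_integral_sub_integral_le_entF (F : EntropyFn) [SigmaFinite γ] [SigmaFinite μ]
    {a b : X → ℝ} (ha : Integrable a γ) (hb : Integrable b μ)
    (hab : ∀ x, (a x, b x) ∈ F.affineMinorants) :
    ENNReal.ofReal (∫ x, a x ∂γ - ∫ x, b x ∂μ) ≤ entF F γ μ := by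
  obtain ⟨hint, heq⟩ := integral_dualIntegrand ha hb
  rw [entF_eq_lintegral, ← heq]
  refine (ofReal_integral_le_lintegral_ofReal hint).trans (lintegral_mono fun x => ?_)
  simp only [dualIntegrand, singularPiecewise, piecewise]
  split_ifs
  · exact hab x _ ENNReal.toReal_nonneg
  · rw [F.recC_eq_iSup]
    exact le_iSup (fun p : F.affineMinorants => ENNReal.ofReal p.1.1) ⟨_, hab x⟩

lemma ofReal_mul_measure_le_entF_add (F : EntropyFn) [IsFiniteMeasure γ] [IsFiniteMeasure μ]
    {a b : ℝ} (hab : (a, b) ∈ F.affineMinorants) {A : Set X} (hA : MeasurableSet A) :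
    ENNReal.ofReal a * γ A ≤ entF F γ μ + ENNReal.ofReal b * μ A := by
  have hle := ofReal_integral_sub_integral_le_entF F (γ := γ) (μ := μ)
    ((integrable_const a).indicator hA) ((integrable_const b).indicator hA) fun x => by
      by_cases hx : x ∈ A
      · simpa [hx] using hab
      · simpa [hx] using EntropyFn.zero_mem_affineMinorants
  rw [integral_indicator_const a hA, integral_indicator_const b hA, smul_eq_mul, smul_eq_mul] at hle
  calc ENNReal.ofReal a * γ A = ENNReal.ofReal (γ.real A * a) := by
        rw [ENNReal.ofReal_mul measureReal_nonneg, ofReal_measureReal, mul_comm]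
    _ = ENNReal.ofReal (γ.real A * a - μ.real A * b + μ.real A * b) := by rw [sub_add_cancel]
    _ ≤ entF F γ μ + ENNReal.ofReal b * μ A := by
        refine ENNReal.ofReal_add_le.trans (add_le_add hle ?_)
        rw [ENNReal.ofReal_mul measureReal_nonneg, ofReal_measureReal, mul_comm]

end Entropy

section EntropyDuality

variable {X : Type*} [TopologicalSpace X] [MeasurableSpace X] [BorelSpace X]

/-- The pairs of bounded continuous functions `(a, b)` such that `s ↦ a x s - b x` is an affine
minorant of `F` for every `x`: the test functions in the dual formula for the entropy. -/
def entropyTests (F : EntropyFn) (X : Type*) [TopologicalSpace X] : Set ((X →ᵇ ℝ) × (X →ᵇ ℝ)) :=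
  {p | ∀ x, (p.1 x, p.2 x) ∈ F.affineMinorants}

lemma isMixable_dualIntegrand [TopologicalSpace.PseudoMetrizableSpace X] (F : EntropyFn)
    (γ μ : Measure X) [IsFiniteMeasure γ] [IsFiniteMeasure μ] : IsMixable (μ + γ.singularPart μ)
      ((fun p => dualIntegrand γ μ p.1 p.2) '' entropyTests F X) where
  integrable := by
    rintro _ ⟨p, -, rfl⟩
    exact (integral_dualIntegrand (p.1.integrable γ) (p.2.integrable μ)).1
  mix := by
    rintro _ ⟨p, hp, rfl⟩ _ ⟨q, hq, rfl⟩ η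
    let e := unitIntervalBCF η
    refine ⟨(e * p.1 + (1 - e) * q.1, e * p.2 + (1 - e) * q.2), fun x => ?_, ?_⟩
    · exact EntropyFn.convex_affineMinorants (hp x) (hq x) (η x).2.1 (sub_nonneg.2 (η x).2.2)
        (add_sub_cancel _ _)
    · ext x
      simp only [dualIntegrand, singularPiecewise, piecewise]
      split_ifs
      · change (η x * p.1 x + (1 - η x) * q.1 x) * (γ.rnDeriv μ x).toReal
          - (η x * p.2 x + (1 - η x) * q.2 x) = _
        ring
      · rfl

lemma entF_eq_iSup [TopologicalSpace.PseudoMetrizableSpace X] (F : EntropyFn) (γ μ : Measure X)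
    [IsFiniteMeasure γ] [IsFiniteMeasure μ] :
    entF F γ μ = ⨆ p ∈ entropyTests F X, ENNReal.ofReal (∫ x, p.1 x ∂γ - ∫ x, p.2 x ∂μ) := by
  have hintegral : ∀ p : (X →ᵇ ℝ) × (X →ᵇ ℝ),
      ∫ x, dualIntegrand γ μ p.1 p.2 x ∂(μ + γ.singularPart μ)
        = ∫ x, p.1 x ∂γ - ∫ x, p.2 x ∂μ := fun p =>
    (integral_dualIntegrand (p.1.integrable γ) (p.2.integrable μ)).2
  apply le_antisymm
  · obtain ⟨p, hF, hrec⟩ := F.exists_seq_affineMinorants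
    let g : ℕ → X → ℝ := fun n => dualIntegrand γ μ
      (BoundedContinuousFunction.const X (p n).1.1) (BoundedContinuousFunction.const X (p n).1.2)
    have h0 : 0 ∈ (fun p => dualIntegrand γ μ p.1 p.2) '' entropyTests F X :=
      ⟨0, fun _ => EntropyFn.zero_mem_affineMinorants, by
        ext x; simp [dualIntegrand, singularPiecewise, piecewise]⟩
    have hg : ∀ n, g n ∈ (fun p => dualIntegrand γ μ p.1 p.2) '' entropyTests F X := fun n =>
      ⟨(.const X (p n).1.1, .const X (p n).1.2), fun _ => (p n).2, rfl⟩
    calc entF F γ μ = ∫⁻ x, ⨆ n, ENNReal.ofReal (g n x) ∂(μ + γ.singularPart μ) := by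
          rw [entF_eq_lintegral]
          refine lintegral_congr fun x => ?_
          simp only [g, dualIntegrand, singularPiecewise, piecewise]
          split_ifs
          · exact hF _ ENNReal.toReal_nonneg
          · exact hrec
      _ ≤ ⨆ p ∈ entropyTests F X, ENNReal.ofReal (∫ x, p.1 x ∂γ - ∫ x, p.2 x ∂μ) := by
          refine ((isMixable_dualIntegrand F γ μ).lintegral_iSup_le h0 hg).trans (iSup₂_le ?_)
          rintro _ ⟨q, hq, rfl⟩
          rw [hintegral q]
          exact le_iSup₂ (f := fun p _ => ENNReal.ofReal (∫ x, p.1 x ∂γ - ∫ x, p.2 x ∂μ)) q hq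
  · exact iSup₂_le fun p hp => ofReal_integral_sub_integral_le_entF F (p.1.integrable γ)
      (p.2.integrable μ) hp

lemma lowerSemicontinuous_entF [TopologicalSpace.PseudoMetrizableSpace X] (F : EntropyFn)
    (μ : Measure X) [IsFiniteMeasure μ] :
    LowerSemicontinuous fun γ : FiniteMeasure X => entF F (γ : Measure X) μ := by
  simp_rw [entF_eq_iSup]
  refine lowerSemicontinuous_biSup fun p _ => Continuous.lowerSemicontinuous ?_
  exact ENNReal.continuous_ofReal.comp
    ((FiniteMeasure.continuous_integral_boundedContinuousFunction p.1).sub continuous_const)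

end EntropyDuality

section ProbabilityMeasures

variable {X Y : Type*} [TopologicalSpace X] [MeasurableSpace X] [OpensMeasurableSpace X]
  [TopologicalSpace Y] [MeasurableSpace Y]

lemma isInducing_map_probabilityMeasure [BorelSpace X] [HasOuterApproxClosed X] [BorelSpace Y]
    [HasOuterApproxClosed Y] [FirstCountableTopology (ProbabilityMeasure Y)] {f : X → Y}
    (hf : IsInducing f) : IsInducing fun μ : ProbabilityMeasure X =>
      μ.map hf.continuous.measurable.aemeasurable := by
  set Φ := fun μ : ProbabilityMeasure X => μ.map hf.continuous.measurable.aemeasurable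
  refine isInducing_iff_nhds.2 fun μ => le_antisymm
    ((ProbabilityMeasure.continuous_map hf.continuous).tendsto μ).le_comap ?_
  suffices Tendsto (fun ν => ν) (comap Φ (𝓝 (Φ μ))) (𝓝 μ) from this
  refine tendsto_of_forall_isOpen_le_liminf' fun G hG => ?_
  obtain ⟨G', hG', rfl⟩ := hf.isOpen_iff.1 hG
  have hopen := ProbabilityMeasure.le_liminf_measure_open_of_tendsto
    (tendsto_comap (f := Φ) (x := 𝓝 (Φ μ))) hG'
  simpa only [Φ, ProbabilityMeasure.toMeasure_map, Measure.map_apply hf.continuous.measurable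
    hG'.measurableSet] using hopen

lemma secondCountableTopology_probabilityMeasure (X : Type*) [TopologicalSpace X]
    [TopologicalSpace.MetrizableSpace X] [SecondCountableTopology X] [MeasurableSpace X]
    [BorelSpace X] : SecondCountableTopology (ProbabilityMeasure X) := by
  -- Pushing forward along an embedding of `X` into the Hilbert cube embeds `𝒫(X)` into a compact
  -- metrizable space.
  let := TopologicalSpace.metrizableSpaceMetric X
  let := TopologicalSpace.metrizableSpaceMetric (ProbabilityMeasure (ℕ → unitInterval))
  obtain ⟨f, hf⟩ := Metric.PiNatEmbed.exists_embedding_to_hilbert_cube (X := X)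
  exact (isInducing_map_probabilityMeasure hf.isInducing).secondCountableTopology

lemma probabilityMeasure_eq_generateFrom_integral :
    (inferInstance : TopologicalSpace (ProbabilityMeasure X)) = TopologicalSpace.generateFrom
      {s | ∃ (f : X →ᵇ ℝ) (V : Set ℝ), IsOpen V ∧
        s = {p : ProbabilityMeasure X | ∫ y, f y ∂(p : Measure X) ∈ V}} := by
  refine le_antisymm (le_generateFrom ?_) (continuous_id_iff_le.1 ?_)
  · rintro _ ⟨f, V, hV, rfl⟩
    exact hV.preimage (ProbabilityMeasure.continuous_integral_boundedContinuousFunction f)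
  · refine (@ProbabilityMeasure.continuous_iff_forall_continuous_integral _ _ _ _ _ (_) _).2
      fun f => continuous_def.2 fun V hV => ?_
    exact TopologicalSpace.isOpen_generateFrom_of_mem ⟨f, V, hV, rfl⟩

/-- A Markov kernel as a map into the space of probability measures. -/
def kernelProb {Z : Type*} [MeasurableSpace Z] {X : Type*} [MeasurableSpace X]
    (κ : ProbabilityTheory.Kernel Z X) [ProbabilityTheory.IsMarkovKernel κ] (z : Z) :
    ProbabilityMeasure X :=
  ⟨κ z, inferInstance⟩

lemma measurable_kernelProb [TopologicalSpace.MetrizableSpace X] [SecondCountableTopology X]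
    [BorelSpace X] {Z : Type*} [MeasurableSpace Z] (κ : ProbabilityTheory.Kernel Z X)
    [ProbabilityTheory.IsMarkovKernel κ] : Measurable[_, borel _] (kernelProb κ) := by
  have := secondCountableTopology_probabilityMeasure X
  rw [borel_eq_generateFrom_of_subbasis probabilityMeasure_eq_generateFrom_integral]
  refine measurable_generateFrom ?_
  rintro _ ⟨f, V, hV, rfl⟩
  exact (StronglyMeasurable.integral_kernel (κ := κ) f.continuous.stronglyMeasurable).measurable
    hV.measurableSet

/-- The convex combination `t p + (1 - t) q` of two probability measures. -/
def convexComb {X : Type*} [MeasurableSpace X] (p q : ProbabilityMeasure X)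
    (t : unitInterval) : ProbabilityMeasure X :=
  ⟨ENNReal.ofReal t • (p : Measure X) + ENNReal.ofReal (1 - t) • (q : Measure X), ⟨by
    simp [← ENNReal.ofReal_add t.2.1 (sub_nonneg.2 t.2.2)]⟩⟩

lemma integral_convexComb {X : Type*} [MeasurableSpace X] {p q : ProbabilityMeasure X}
    (t : unitInterval) {f : X → ℝ} (hp : Integrable f p) (hq : Integrable f q) :
    ∫ y, f y ∂(convexComb p q t : Measure X) =
      t * ∫ y, f y ∂(p : Measure X) + (1 - t) * ∫ y, f y ∂(q : Measure X) := by
  refine (integral_add_measure (hp.smul_measure ENNReal.ofReal_ne_top)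
    (hq.smul_measure ENNReal.ofReal_ne_top)).trans ?_
  simp [integral_smul_measure, t.2.1, t.2.2]

/-- Convexity of a function on probability measures. -/
def ConvexOnProb {X : Type*} [MeasurableSpace X] (f : ProbabilityMeasure X → ℝ≥0∞) : Prop :=
  ∀ p q (t : unitInterval),
    f (convexComb p q t) ≤ ENNReal.ofReal t * f p + ENNReal.ofReal (1 - t) * f q

/-- The algebraic dual of the bounded continuous functions with the weak topology. Its continuous
linear functionals are exactly the evaluations at bounded continuous functions. -/
abbrev WeakBCFDual (X : Type*) [TopologicalSpace X] : Type _ :=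
  WeakBilin (LinearMap.id : Module.Dual ℝ (X →ᵇ ℝ) →ₗ[ℝ] Module.Dual ℝ (X →ᵇ ℝ))

/-- A probability measure as a linear functional on the bounded continuous functions. -/
def toWeakBCFDual (p : ProbabilityMeasure X) : WeakBCFDual X :=
  ({ toFun := fun f : X →ᵇ ℝ => ∫ y, f y ∂(p : Measure X)
     map_add' := fun f g => integral_add (f.integrable _) (g.integrable _)
     map_smul' := fun c _ => integral_const_mul c _ } : Module.Dual ℝ (X →ᵇ ℝ))

lemma toWeakBCFDual_convexComb (p q : ProbabilityMeasure X) (t : unitInterval) :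
    toWeakBCFDual (convexComb p q t) = (t : ℝ) • toWeakBCFDual p + (1 - t : ℝ) • toWeakBCFDual q :=
  LinearMap.ext fun f => by
    change ∫ y, f y ∂(convexComb p q t : Measure X) = _
    exact integral_convexComb t (f.integrable _) (f.integrable _)

lemma isInducing_toWeakBCFDual :
    IsInducing (toWeakBCFDual : ProbabilityMeasure X → WeakBCFDual X) := by
  refine isInducing_iff_nhds.2 fun p => le_antisymm ?_ ?_
  · refine ((WeakBilin.continuous_of_continuous_eval _ fun f => ?_).tendsto p).le_comap
    exact ProbabilityMeasure.continuous_integral_boundedContinuousFunction f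
  · suffices Tendsto (fun q : ProbabilityMeasure X => q)
        (comap toWeakBCFDual (𝓝 (toWeakBCFDual p))) (𝓝 p) from this
    refine ProbabilityMeasure.tendsto_iff_forall_integral_tendsto.2 fun f => ?_
    exact ((WeakBilin.eval_continuous _ f).tendsto _).comp tendsto_comap

lemma exists_boundedContinuous_minorant_gt {f : ProbabilityMeasure X → ℝ≥0∞}
    {p₀ : ProbabilityMeasure X} (hf : LowerSemicontinuousAt f p₀) (hconv : ConvexOnProb f)
    {c : ℝ≥0∞} (hc : c < f p₀) :
    ∃ φ : X →ᵇ ℝ, (∀ q : ProbabilityMeasure X, ENNReal.ofReal (∫ y, φ y ∂(q : Measure X)) ≤ f q) ∧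
      c < ENNReal.ofReal (∫ y, φ y ∂(p₀ : Measure X)) := by
  obtain ⟨l, b, hle, hlt⟩ := exists_affine_minorant_gt isInducing_toWeakBCFDual hf
      (fun p q t ht ht' =>
        ⟨convexComb p q ⟨t, ht, ht'⟩, toWeakBCFDual_convexComb p q ⟨t, ht, ht'⟩, hconv p q _⟩) hc
  obtain ⟨φ, rfl⟩ := LinearMap.dualEmbedding_surjective _ l
  have hint : ∀ q : ProbabilityMeasure X,
      ∫ y, (φ + BoundedContinuousFunction.const X b) y ∂(q : Measure X)
        = ∫ y, φ y ∂(q : Measure X) + b := fun q => by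
    simp [integral_add (φ.integrable _) (integrable_const b)]
  exact ⟨φ + .const X b, fun q => hint q ▸ hle q, hint p₀ ▸ hlt⟩

end ProbabilityMeasures

section CoerciveFamilies

variable {X Q : Type*} [TopologicalSpace X] [TopologicalSpace Q]

/-- A family of functions `D x : Q → [0, ∞]` is uniformly coercive if outside of a compact set
which does not depend on `x` all of them are as large as prescribed. -/
def UniformlyCoercive {X Q : Type*} [TopologicalSpace Q] (D : X → Q → ℝ≥0∞) : Prop :=
  ∀ R : ℝ≥0, ∃ Z : Set Q, IsCompact Z ∧ ∀ x, ∀ q ∉ Z, R ≤ D x q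

lemma eventually_ofReal_sub_le {f : X → ℝ≥0∞} {g : X → ℝ} {x₀ : X}
    (hf : LowerSemicontinuousAt f x₀) (hg : ContinuousAt g x₀)
    (h : ENNReal.ofReal (g x₀) ≤ f x₀) {δ : ℝ} (hδ : 0 < δ) :
    ∀ᶠ x in 𝓝 x₀, ENNReal.ofReal (g x - δ) ≤ f x := by
  rcases lt_or_ge (g x₀) δ with hlt | hge
  · filter_upwards [hg.eventually_lt_const hlt] with x hx
    simp [ENNReal.ofReal_of_nonpos (sub_nonpos.2 hx.le)]
  · have hlt : ENNReal.ofReal (g x₀ - δ / 2) < f x₀ :=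
      ((ENNReal.ofReal_lt_ofReal_iff (hδ.trans_le hge)).2 (by linarith)).trans_le h
    filter_upwards [hf _ hlt, hg.eventually_lt_const (show g x₀ < g x₀ + δ / 2 by linarith)]
      with x hx hx'
    exact (ENNReal.ofReal_le_ofReal (by linarith)).trans hx.le

lemma UniformlyCoercive.eventually_forall_ofReal_sub_le {D : X → Q → ℝ≥0∞}
    (hcoer : UniformlyCoercive D) (hD : LowerSemicontinuous fun z : X × Q => D z.1 z.2)
    {g : Q → ℝ} (hg : Continuous g) {R : ℝ} (hgR : ∀ q, g q ≤ R) {x₀ : X}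
    (h : ∀ q, ENNReal.ofReal (g q) ≤ D x₀ q) {δ : ℝ} (hδ : 0 < δ) :
    ∀ᶠ x in 𝓝 x₀, ∀ q, ENNReal.ofReal (g q - δ) ≤ D x q := by
  obtain ⟨Z, hZ, hlarge⟩ := hcoer R.toNNReal
  have hnear : ∀ᶠ x in 𝓝 x₀, ∀ q ∈ Z, ENNReal.ofReal (g q - δ) ≤ D x q :=
    hZ.eventually_forall_of_forall_eventually fun q _ =>
      eventually_ofReal_sub_le (hD (x₀, q)) (hg.comp continuous_snd).continuousAt (h q) hδ
  filter_upwards [hnear] with x hx q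
  by_cases hq : q ∈ Z
  · exact hx q hq
  · exact (ENNReal.ofReal_le_ofReal ((sub_le_self _ hδ.le).trans (hgR q))).trans (hlarge x q hq)

lemma exists_seq_iSup_eq_of_lowerSemicontinuous [SecondCountableTopology X] {ι : Type*}
    [Nonempty ι] {e : ι → X → ℝ≥0∞} (he : ∀ i, LowerSemicontinuous (e i)) :
    ∃ s : ℕ → ι, ∀ x, ⨆ n, e (s n) x = ⨆ i, e i x := by
  obtain ⟨S, hS, hScount, hSlub⟩ := exists_countable_lowerSemicontinuous_isLUB
    (by rintro _ ⟨i, rfl⟩; exact he i) (isLUB_iSup (f := e))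
  obtain ⟨i₀⟩ := ‹Nonempty ι›
  obtain ⟨f, hf⟩ := (hScount.insert (e i₀)).exists_eq_range (insert_nonempty _ _)
  have hfe : ∀ n, ∃ i, e i = f n := fun n =>
    insert_subset (mem_range_self i₀) hS (hf ▸ mem_range_self n)
  choose s hs using hfe
  have hlub : IsLUB (range f) (⨆ i, e i) := hf ▸ hSlub.of_subset_of_superset isLUB_iSup
    (subset_insert _ _) (insert_subset (mem_range_self i₀) hS)
  refine ⟨s, fun x => ?_⟩
  simpa only [hs, iSup_apply] using congrFun hlub.iSup_eq x

end CoerciveFamilies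

section TransportTests

variable {X Y : Type*} [TopologicalSpace X] [TopologicalSpace Y] [MeasurableSpace Y]

lemma exists_boundedContinuous_eq_one_of_mem_nhds [CompletelyRegularSpace X] {x₀ : X} {u : Set X}
    (hu : u ∈ 𝓝 x₀) :
    ∃ ρ : X →ᵇ ℝ, (∀ x, ρ x ∈ Icc 0 1) ∧ ρ x₀ = 1 ∧ ∀ x ∉ u, ρ x = 0 := by
  obtain ⟨v, hvu, hv, hx₀⟩ := mem_nhds_iff.1 hu
  obtain ⟨η, hη, hη₀, hη₁⟩ := CompletelyRegularSpace.completely_regular x₀ vᶜ hv.isClosed_compl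
    (not_not.2 hx₀)
  refine ⟨unitIntervalBCF ⟨fun x => unitInterval.symm (η x), by fun_prop⟩,
    fun x => (unitInterval.symm (η x)).2, ?_, fun x hx => ?_⟩
  · simp [hη₀]
  · simp [hη₁ fun h => hx (hvu h)]

variable [OpensMeasurableSpace Y]

lemma exists_boundedContinuous_eventually_le {D : X → ProbabilityMeasure Y → ℝ≥0∞}
    (hcoer : UniformlyCoercive D)
    (hD : LowerSemicontinuous fun z : X × ProbabilityMeasure Y => D z.1 z.2) {x₀ : X}
    (hconv : ConvexOnProb (D x₀)) {q₀ : ProbabilityMeasure Y} {c : ℝ≥0∞} (hc : c < D x₀ q₀) :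
    ∃ φ : Y →ᵇ ℝ,
      (∀ᶠ x in 𝓝 x₀, ∀ q : ProbabilityMeasure Y,
        ENNReal.ofReal (∫ y, φ y ∂(q : Measure Y)) ≤ D x q) ∧
      c < ENNReal.ofReal (∫ y, φ y ∂(q₀ : Measure Y)) := by
  have hD₀ : LowerSemicontinuous (D x₀) := hD.comp (g := fun q => (x₀, q)) (by fun_prop)
  obtain ⟨φ, hφ, hcφ⟩ := exists_boundedContinuous_minorant_gt (hD₀ q₀) hconv hc
  have hint : ∀ (δ : ℝ) (q : ProbabilityMeasure Y),
      ∫ y, (φ - .const Y δ) y ∂(q : Measure Y) = ∫ y, φ y ∂(q : Measure Y) - δ := fun δ q => by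
    simp [integral_sub (φ.integrable _) (integrable_const δ)]
  have hcont : Continuous fun δ => ENNReal.ofReal (∫ y, φ y ∂(q₀ : Measure Y) - δ) :=
    ENNReal.continuous_ofReal.comp (by fun_prop)
  have hpos : ∀ᶠ δ in 𝓝[>] (0 : ℝ), 0 < δ := self_mem_nhdsWithin
  obtain ⟨δ, hδc, hδ⟩ := (((hcont.tendsto 0).eventually_const_lt (by simpa using hcφ)).filter_mono
    nhdsWithin_le_nhds |>.and hpos).exists
  refine ⟨φ - .const Y δ, ?_, hint δ q₀ ▸ hδc⟩
  simp only [hint]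
  exact hcoer.eventually_forall_ofReal_sub_le hD
    (ProbabilityMeasure.continuous_integral_boundedContinuousFunction φ)
    (fun q => (le_abs_self _).trans (φ.norm_integral_le_norm (q : Measure Y))) hφ hδ

lemma exists_mul_minorant_gt [CompletelyRegularSpace X]
    {D : X → ProbabilityMeasure Y → ℝ≥0∞} (hcoer : UniformlyCoercive D)
    (hD : LowerSemicontinuous fun z : X × ProbabilityMeasure Y => D z.1 z.2)
    (hconv : ∀ x, ConvexOnProb (D x)) {x₀ : X} {q₀ : ProbabilityMeasure Y} {c : ℝ≥0∞}
    (hc : c < D x₀ q₀) :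
    ∃ (ρ : X →ᵇ ℝ) (φ : Y →ᵇ ℝ),
      (∀ x (q : ProbabilityMeasure Y),
        ENNReal.ofReal (ρ x * ∫ y, φ y ∂(q : Measure Y)) ≤ D x q) ∧
      c < ENNReal.ofReal (ρ x₀ * ∫ y, φ y ∂(q₀ : Measure Y)) := by
  obtain ⟨φ, hφ, hcφ⟩ := exists_boundedContinuous_eventually_le hcoer hD (hconv x₀) hc
  obtain ⟨ρ, hρ, hρ₀, hρu⟩ := exists_boundedContinuous_eq_one_of_mem_nhds hφ
  refine ⟨ρ, φ, fun x q => ?_, by rwa [hρ₀, one_mul]⟩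
  by_cases hx : ∀ q : ProbabilityMeasure Y, ENNReal.ofReal (∫ y, φ y ∂(q : Measure Y)) ≤ D x q
  · rw [ENNReal.ofReal_mul (hρ x).1]
    exact (mul_le_of_le_one_left' (ENNReal.ofReal_le_one.2 (hρ x).2)).trans (hx q)
  · simp [hρu x hx]

/-- The bounded continuous functions `ψ` on `X × Y` with `∫ ψ(x, ·) dq ≤ D x q` for all `x` and `q`,
that is, the admissible test functions in the dual description of the weak transport cost. -/
def transportTests {X Y : Type*} [TopologicalSpace X] [TopologicalSpace Y] [MeasurableSpace Y]
    (D : X → ProbabilityMeasure Y → ℝ≥0∞) : Set ((X × Y) →ᵇ ℝ) :=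
  {ψ | ∀ x (q : ProbabilityMeasure Y), ENNReal.ofReal (∫ y, ψ (x, y) ∂(q : Measure Y)) ≤ D x q}

lemma exists_seq_transportTests_iSup_eq [CompletelyRegularSpace X] [SecondCountableTopology X]
    [SecondCountableTopology (ProbabilityMeasure Y)]
    {D : X → ProbabilityMeasure Y → ℝ≥0∞} (hcoer : UniformlyCoercive D)
    (hD : LowerSemicontinuous fun z : X × ProbabilityMeasure Y => D z.1 z.2)
    (hconv : ∀ x, ConvexOnProb (D x)) :
    ∃ ψ : ℕ → (X × Y) →ᵇ ℝ, (∀ n, ψ n ∈ transportTests D) ∧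
      ∀ x (q : ProbabilityMeasure Y),
        D x q = ⨆ n, ENNReal.ofReal (∫ y, ψ n (x, y) ∂(q : Measure Y)) := by
  let Minorants := {P : (X →ᵇ ℝ) × (Y →ᵇ ℝ) // ∀ x (q : ProbabilityMeasure Y),
    ENNReal.ofReal (P.1 x * ∫ y, P.2 y ∂(q : Measure Y)) ≤ D x q}
  let e : Minorants → X × ProbabilityMeasure Y → ℝ≥0∞ := fun P z =>
    ENNReal.ofReal (P.1.1 z.1 * ∫ y, P.1.2 y ∂(z.2 : Measure Y))
  have : Nonempty Minorants := ⟨⟨0, fun x q => by simp⟩⟩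
  have he : ∀ P, LowerSemicontinuous (e P) := fun P =>
    (ENNReal.continuous_ofReal.comp ((P.1.1.continuous.comp continuous_fst).mul
      ((ProbabilityMeasure.continuous_integral_boundedContinuousFunction P.1.2).comp
        continuous_snd))).lowerSemicontinuous
  obtain ⟨P, hP⟩ := exists_seq_iSup_eq_of_lowerSemicontinuous he
  let ψ : ℕ → (X × Y) →ᵇ ℝ := fun n =>
    (P n).1.1.compContinuous .fst * (P n).1.2.compContinuous .snd
  have hψ : ∀ n x (q : ProbabilityMeasure Y),
      ENNReal.ofReal (∫ y, ψ n (x, y) ∂(q : Measure Y)) = e (P n) (x, q) := fun n x q =>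
    congrArg ENNReal.ofReal (integral_const_mul ((P n).1.1 x) (P n).1.2)
  refine ⟨ψ, fun n x q => (hψ n x q).trans_le ((P n).2 x q), fun x q => ?_⟩
  simp only [hψ, hP]
  refine le_antisymm (le_of_forall_lt fun c hc => ?_) (iSup_le fun P => P.2 x q)
  obtain ⟨ρ, φ, hle, hlt⟩ := exists_mul_minorant_gt hcoer hD hconv hc
  exact hlt.trans_le (le_iSup (e · (x, q)) ⟨(ρ, φ), hle⟩)

end TransportTests

section Blending

variable {X Y : Type*} [TopologicalSpace X] [TopologicalSpace Y] [MeasurableSpace Y]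

/-- The function `(x, y) ↦ η x * ψ₁ (x, y) + (1 - η x) * ψ₂ (x, y)`, which mixes two functions on
the product with a weight depending on the first variable only. -/
def blendFst (η : C(X, unitInterval)) (ψ₁ ψ₂ : (X × Y) →ᵇ ℝ) : (X × Y) →ᵇ ℝ :=
  (unitIntervalBCF η).compContinuous .fst * ψ₁ + (1 - (unitIntervalBCF η).compContinuous .fst) * ψ₂

variable [OpensMeasurableSpace Y]

lemma integral_blendFst (η : C(X, unitInterval)) (ψ₁ ψ₂ : (X × Y) →ᵇ ℝ)
    (x : X) (q : Measure Y) [IsFiniteMeasure q] :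
    ∫ y, blendFst η ψ₁ ψ₂ (x, y) ∂q =
      η x * ∫ y, ψ₁ (x, y) ∂q + (1 - η x) * ∫ y, ψ₂ (x, y) ∂q := by
  have hint : ∀ ψ : (X × Y) →ᵇ ℝ, Integrable (fun y => ψ (x, y)) q := fun ψ =>
    (ψ.compContinuous ⟨fun y => (x, y), by fun_prop⟩).integrable q
  rw [← integral_const_mul, ← integral_const_mul, ← integral_add ((hint ψ₁).const_mul _)
    ((hint ψ₂).const_mul _)]
  rfl

lemma blendFst_mem_transportTests {D : X → ProbabilityMeasure Y → ℝ≥0∞} {ψ₁ ψ₂ : (X × Y) →ᵇ ℝ}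
    (h₁ : ψ₁ ∈ transportTests D) (h₂ : ψ₂ ∈ transportTests D) (η : C(X, unitInterval)) :
    blendFst η ψ₁ ψ₂ ∈ transportTests D := fun x q => by
  rw [integral_blendFst]
  refine (ENNReal.ofReal_le_ofReal (Convex.combo_le_max _ _ (η x).2.1 (sub_nonneg.2 (η x).2.2)
    (add_sub_cancel _ _))).trans ?_
  rw [ENNReal.ofReal_max]
  exact max_le (h₁ x q) (h₂ x q)

end Blending

section WeakTransport

variable {X Y : Type*} [TopologicalSpace X] [MeasurableSpace X] [TopologicalSpace Y]
  [MeasurableSpace Y] [StandardBorelSpace Y] [Nonempty Y] {D : X → ProbabilityMeasure Y → ℝ≥0∞}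

/-- The weak transport cost `∫ D(x, γ_x) dγ₁(x)` of a `[0, ∞]`-valued cost `D`. -/
def weakCost (D : X → ProbabilityMeasure Y → ℝ≥0∞) (γ : Measure (X × Y)) [IsFiniteMeasure γ] :
    ℝ≥0∞ :=
  ∫⁻ x, D x (kernelProb γ.condKernel x) ∂γ.fst

section Duality

variable [OpensMeasurableSpace (X × Y)]

lemma ofReal_integral_le_weakCost {ψ : (X × Y) →ᵇ ℝ} (hψ : ψ ∈ transportTests D)
    (γ : Measure (X × Y)) [IsFiniteMeasure γ] : ENNReal.ofReal (∫ z, ψ z ∂γ) ≤ weakCost D γ := by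
  rw [← Measure.integral_condKernel (ψ.integrable γ)]
  refine (ofReal_integral_le_lintegral_ofReal (ψ.integrable γ).integral_condKernel).trans ?_
  exact lintegral_mono fun x => hψ x (kernelProb γ.condKernel x)

lemma isMixable_transportTests [OpensMeasurableSpace Y] (D : X → ProbabilityMeasure Y → ℝ≥0∞)
    (γ : Measure (X × Y)) [IsFiniteMeasure γ] :
    IsMixable γ.fst ((fun ψ x => ∫ y, ψ (x, y) ∂γ.condKernel x) '' transportTests D) where
  integrable := by
    rintro _ ⟨ψ, -, rfl⟩
    exact (ψ.integrable γ).integral_condKernel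
  mix := by
    rintro _ ⟨ψ₁, h₁, rfl⟩ _ ⟨ψ₂, h₂, rfl⟩ η
    exact ⟨blendFst η ψ₁ ψ₂, blendFst_mem_transportTests h₁ h₂ η,
      funext fun x => integral_blendFst η ψ₁ ψ₂ x _⟩

end Duality

section Semicontinuity

variable [TopologicalSpace.PseudoMetrizableSpace X] [SecondCountableTopology X] [BorelSpace X]
  [TopologicalSpace.MetrizableSpace Y] [SecondCountableTopology Y] [BorelSpace Y]

lemma weakCost_eq_iSup (hcoer : UniformlyCoercive D)
    (hD : LowerSemicontinuous fun z : X × ProbabilityMeasure Y => D z.1 z.2)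
    (hconv : ∀ x, ConvexOnProb (D x)) (γ : Measure (X × Y)) [IsFiniteMeasure γ] :
    weakCost D γ = ⨆ ψ ∈ transportTests D, ENNReal.ofReal (∫ z, ψ z ∂γ) := by
  refine le_antisymm ?_ (iSup₂_le fun ψ hψ => ofReal_integral_le_weakCost hψ γ)
  have := secondCountableTopology_probabilityMeasure Y
  obtain ⟨ψ, hψ, hDψ⟩ := exists_seq_transportTests_iSup_eq hcoer hD hconv
  calc weakCost D γ
      = ∫⁻ x, ⨆ n, ENNReal.ofReal (∫ y, ψ n (x, y) ∂γ.condKernel x) ∂γ.fst :=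
        lintegral_congr fun x => hDψ x (kernelProb γ.condKernel x)
    _ ≤ ⨆ g ∈ (fun ψ x => ∫ y, ψ (x, y) ∂γ.condKernel x) '' transportTests D,
          ENNReal.ofReal (∫ x, g x ∂γ.fst) :=
        (isMixable_transportTests D γ).lintegral_iSup_le ⟨0, fun x q => by simp, by simp; rfl⟩
          fun n => ⟨ψ n, hψ n, rfl⟩
    _ ≤ ⨆ ψ ∈ transportTests D, ENNReal.ofReal (∫ z, ψ z ∂γ) := by
        refine iSup₂_le ?_
        rintro _ ⟨ψ, hψ, rfl⟩
        rw [Measure.integral_condKernel (ψ.integrable γ)]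
        exact le_iSup₂_of_le ψ hψ le_rfl

lemma lowerSemicontinuous_weakCost (hcoer : UniformlyCoercive D)
    (hD : LowerSemicontinuous fun z : X × ProbabilityMeasure Y => D z.1 z.2)
    (hconv : ∀ x, ConvexOnProb (D x)) :
    LowerSemicontinuous fun γ : FiniteMeasure (X × Y) => weakCost D (γ : Measure (X × Y)) := by
  simp_rw [weakCost_eq_iSup hcoer hD hconv]
  exact lowerSemicontinuous_biSup fun ψ _ => (ENNReal.continuous_ofReal.comp
    (FiniteMeasure.continuous_integral_boundedContinuousFunction ψ)).lowerSemicontinuous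

end Semicontinuity

end WeakTransport

section TailMoment

variable {Y : Type*} [MeasurableSpace Y] {K : ℕ → Set Y}

/-- A weighted sum of the masses outside of the sets `K n`. Bounding it by a constant makes a family
of measures tight if the sets `K n` are compact. -/
def tailMoment (K : ℕ → Set Y) (q : Measure Y) : ℝ≥0∞ :=
  ∑' n, 2 ^ n * q (K n)ᶜ

lemma tailMoment_convexComb (K : ℕ → Set Y) (p q : ProbabilityMeasure Y) (t : unitInterval) :
    tailMoment K (convexComb p q t : Measure Y) = ENNReal.ofReal t * tailMoment K (p : Measure Y) +
      ENNReal.ofReal (1 - t) * tailMoment K (q : Measure Y) := by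
  simp_rw [tailMoment, ← ENNReal.tsum_mul_left, ← ENNReal.tsum_add]
  refine tsum_congr fun n => ?_
  simp only [convexComb, ProbabilityMeasure.coe_mk, Measure.add_apply, Measure.smul_apply,
    smul_eq_mul]
  ring

lemma measurable_tailMoment {X : Type*} [MeasurableSpace X] (hK : ∀ n, MeasurableSet (K n))
    (κ : ProbabilityTheory.Kernel X Y) : Measurable fun x => tailMoment K (κ x) :=
  Measurable.tsum fun n => (κ.measurable_coe (hK n).compl).const_mul _

lemma lintegral_tailMoment {X : Type*} [MeasurableSpace X] (hK : ∀ n, MeasurableSet (K n))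
    (μ : Measure X) (κ : ProbabilityTheory.Kernel X Y) :
    ∫⁻ x, tailMoment K (κ x) ∂μ = tailMoment K (μ.bind κ) := by
  have hmeas : ∀ n, Measurable fun x => κ x (K n)ᶜ := fun n => κ.measurable_coe (hK n).compl
  simp_rw [tailMoment, lintegral_tsum fun n => ((hmeas n).const_mul _).aemeasurable,
    lintegral_const_mul _ (hmeas _), Measure.bind_apply (hK _).compl κ.aemeasurable]

variable [TopologicalSpace Y] [OpensMeasurableSpace Y]

lemma lowerSemicontinuous_tailMoment [HasOuterApproxClosed Y] (hK : ∀ n, IsClosed (K n)) :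
    LowerSemicontinuous fun q : ProbabilityMeasure Y => tailMoment K (q : Measure Y) := by
  refine lowerSemicontinuous_tsum fun n => ?_
  have hlsc : LowerSemicontinuous fun q : ProbabilityMeasure Y => (q : Measure Y) (K n)ᶜ :=
    lowerSemicontinuous_iff_le_liminf.2 fun q =>
      ProbabilityMeasure.le_liminf_measure_open_of_tendsto tendsto_id (hK n).isOpen_compl
  exact (ENNReal.continuous_const_mul (by simp)).comp_lowerSemicontinuous hlsc
    fun _ _ h => mul_le_mul_right h _

lemma uniformlyCoercive_tailMoment [BorelSpace Y] [T2Space Y] [NormalSpace Y] {X : Type*}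
    (hK : ∀ n, IsCompact (K n)) :
    UniformlyCoercive fun (_ : X) (q : ProbabilityMeasure Y) => tailMoment K (q : Measure Y) := by
  intro R
  refine ⟨{q : ProbabilityMeasure Y | ∀ n, q (K n)ᶜ ≤ R * (1 / 2) ^ n},
    isCompact_setOfPred_probabilityMeasure_mass_eq_compl_isCompact_le ?_ hK (Or.inl inferInstance),
    fun _ q hq => ?_⟩
  · have hpow := NNReal.tendsto_pow_atTop_nhds_zero_of_lt_one (r := 1 / 2) (half_lt_self one_pos)
    simpa only [mul_zero] using hpow.const_mul R
  · obtain ⟨n, hn⟩ : ∃ n, R * (1 / 2) ^ n < q (K n)ᶜ := by simpa using hq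
    calc (R : ℝ≥0∞) = ((2 ^ n * (R * (1 / 2) ^ n) : ℝ≥0) : ℝ≥0∞) := by
          rw [mul_left_comm, ← mul_pow]; simp
      _ ≤ ((2 ^ n * q (K n)ᶜ : ℝ≥0) : ℝ≥0∞) := by gcongr
      _ = 2 ^ n * (q : Measure Y) (K n)ᶜ := by simp
      _ ≤ tailMoment K q := ENNReal.le_tsum n

end TailMoment

lemma UniformlyCoercive.add_const_mul {X Q : Type*} [TopologicalSpace Q] {D : X → Q → ℝ≥0∞}
    (hD : UniformlyCoercive D) (D' : X → Q → ℝ≥0∞) {ε : ℝ≥0} (hε : 0 < ε) :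
    UniformlyCoercive fun x q => D' x q + ε * D x q := fun R => by
  obtain ⟨Z, hZ, hRZ⟩ := hD (R / ε)
  refine ⟨Z, hZ, fun x q hq => le_add_of_le_right ?_⟩
  calc (R : ℝ≥0∞) = ε * (R / ε : ℝ≥0) := by
        rw [← ENNReal.coe_mul, mul_div_cancel₀ _ hε.ne']
    _ ≤ ε * D x q := by gcongr; exact hRZ x q hq

lemma lowerSemicontinuousOn_of_forall_add_mul {α : Type*} [TopologicalSpace α] {f g : α → ℝ≥0∞}
    {S : Set α} {c : ℝ≥0} (hg : ∀ x ∈ S, g x ≤ c)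
    (h : ∀ ε : ℝ≥0, 0 < ε → LowerSemicontinuous fun x => f x + ε * g x) :
    LowerSemicontinuousOn f S := by
  intro x _ t ht
  obtain ⟨ε, hlt, hε⟩ : ∃ ε : ℝ≥0, t + ε * c < f x ∧ 0 < ε := by
    have hcont : Continuous fun ε : ℝ≥0 => t + (ε : ℝ≥0∞) * c := continuous_const.add
      ((ENNReal.continuous_mul_const ENNReal.coe_ne_top).comp ENNReal.continuous_coe)
    have hev : ∀ᶠ ε : ℝ≥0 in 𝓝 0, t + ε * c < f x :=
      hcont.continuousAt.eventually_lt_const (by simpa using ht)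
    exact ((hev.filter_mono nhdsWithin_le_nhds).and (eventually_mem_nhdsWithin (s := Ioi 0))).exists
  filter_upwards [nhdsWithin_le_nhds (h ε hε x _ (hlt.trans_le le_self_add)), self_mem_nhdsWithin]
    with y hy hyS
  refine lt_of_add_lt_add_right (hy.trans_le' ?_)
  gcongr
  exact hg y hyS

section Regularization

variable {X Y : Type*} [MeasurableSpace X] [MeasurableSpace Y] [StandardBorelSpace Y] [Nonempty Y]
  {D : X → ProbabilityMeasure Y → ℝ≥0∞} {K : ℕ → Set Y}

lemma weakCost_add_mul_tailMoment (D : X → ProbabilityMeasure Y → ℝ≥0∞)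
    (hK : ∀ n, MeasurableSet (K n)) (ε : ℝ≥0∞) (γ : Measure (X × Y)) [IsFiniteMeasure γ] :
    weakCost (fun x q => D x q + ε * tailMoment K (q : Measure Y)) γ =
      weakCost D γ + ε * tailMoment K γ.snd := by
  have hmeas := measurable_tailMoment hK γ.condKernel
  have hsnd : γ.fst.bind γ.condKernel = γ.snd := by
    rw [← Measure.snd_compProd, γ.disintegrate γ.condKernel]
  simp only [weakCost, kernelProb, ProbabilityMeasure.coe_mk]
  rw [lintegral_add_right _ (hmeas.const_mul ε), lintegral_const_mul ε hmeas,
    lintegral_tailMoment hK, hsnd]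

variable [TopologicalSpace X] [TopologicalSpace.PseudoMetrizableSpace X]
  [SecondCountableTopology X] [BorelSpace X] [TopologicalSpace Y]
  [TopologicalSpace.MetrizableSpace Y] [SecondCountableTopology Y] [BorelSpace Y]

-- The cost `D` need not be coercive, but `D + ε * tailMoment K` is, for every `ε > 0`.
lemma lowerSemicontinuousOn_weakCost
    (hD : LowerSemicontinuous fun z : X × ProbabilityMeasure Y => D z.1 z.2)
    (hconv : ∀ x, ConvexOnProb (D x)) (hK : ∀ n, IsCompact (K n)) {c : ℝ≥0} :
    LowerSemicontinuousOn (fun γ : FiniteMeasure (X × Y) => weakCost D (γ : Measure (X × Y)))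
      {γ | tailMoment K (γ : Measure (X × Y)).snd ≤ c} := by
  have hclosed := fun n => (hK n).isClosed
  refine lowerSemicontinuousOn_of_forall_add_mul (fun γ hγ => hγ) fun ε hε => ?_
  simp_rw [← weakCost_add_mul_tailMoment D (fun n => (hclosed n).measurableSet)]
  refine lowerSemicontinuous_weakCost ((uniformlyCoercive_tailMoment hK).add_const_mul D hε)
    (hD.add ?_) fun x p q t => ?_
  · exact (ENNReal.continuous_const_mul ENNReal.coe_ne_top).comp_lowerSemicontinuous
      ((lowerSemicontinuous_tailMoment hclosed).comp (g := Prod.snd) continuous_snd)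
      fun _ _ h => mul_le_mul_right h _
  · rw [tailMoment_convexComb]
    refine (add_le_add_left (hconv x p q t) _).trans_eq ?_
    ring

end Regularization

section ShiftedIntegral

lemma posE_coe (r : ℝ) : posE r = ENNReal.ofReal r := by
  rw [posE, if_neg (EReal.coe_ne_top r), EReal.toReal_coe]

lemma posE_coe_add_const (g : ℝ≥0∞) (κ : ℝ) :
    posE (g + κ) + ENNReal.ofReal (-κ) = posE (-(g + κ)) + (ENNReal.ofReal κ + g) := by
  cases g with
  | top => simp [posE]
  | coe g =>
    have hcoe : ((g : ℝ≥0∞) : EReal) + κ = ((g + κ : ℝ) : EReal) := rfl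
    rw [hcoe, ← EReal.coe_neg, posE_coe, posE_coe,
      ← ENNReal.toReal_eq_toReal_iff' (by simp) (by simp)]
    repeat rw [ENNReal.toReal_add (by simp) (by simp)]
    simp only [ENNReal.toReal_ofReal', ENNReal.coe_toReal]
    linarith [max_zero_sub_max_neg_zero_eq_self (g + κ), max_zero_sub_max_neg_zero_eq_self κ]

lemma posE_neg_coe_add_const_le (g : ℝ≥0∞) (κ : ℝ) : posE (-(g + κ)) ≤ ENNReal.ofReal (-κ) := by
  cases g with
  | top => simp [posE]
  | coe g =>
    change posE (-((g + κ : ℝ) : EReal)) ≤ _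
    rw [← EReal.coe_neg, posE_coe]
    exact ENNReal.ofReal_le_ofReal (by linarith [g.coe_nonneg])

lemma coe_ennreal_sub_coe_ennreal_eq_add_coe {P N J : ℝ≥0∞} {k : ℝ} (hN : N ≠ ∞)
    (h : P + ENNReal.ofReal (-k) = N + (ENNReal.ofReal k + J)) : (P : EReal) - N = J + k := by
  lift N to ℝ≥0 using hN
  cases J with
  | top =>
    obtain rfl : P = ∞ := by simpa using h
    exact EReal.top_sub_coe (N : ℝ)
  | coe J =>
    have hP : P ≠ ∞ := ne_top_of_le_ne_top (by simp) (le_self_add.trans_eq h)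
    lift P to ℝ≥0 using hP
    have hreal := congrArg ENNReal.toReal h
    repeat rw [ENNReal.toReal_add (by simp) (by simp)] at hreal
    simp only [ENNReal.toReal_ofReal', ENNReal.coe_toReal] at hreal
    change ((P - N : ℝ) : EReal) = ((J + k : ℝ) : EReal)
    congr 1
    linarith [max_zero_sub_max_neg_zero_eq_self k]

lemma eIntegral_coe_add_const {α : Type*} [MeasurableSpace α] (μ : Measure α) [IsFiniteMeasure μ]
    {g : α → ℝ≥0∞} (hg : Measurable g) (κ : ℝ) :
    eIntegral μ (fun x => (g x : EReal) + κ) =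
      ((∫⁻ x, g x ∂μ : ℝ≥0∞) : EReal) + ((κ * μ.real univ : ℝ) : EReal) := by
  have hmeas : Measurable fun x => posE (-((g x : EReal) + κ)) :=
    measurable_ereal_toENNReal.comp (hg.coe_ereal_ennreal.add_const _).neg
  have hconst (r : ℝ) : ∫⁻ _, ENNReal.ofReal r ∂μ = ENNReal.ofReal (r * μ.real univ) := by
    rw [lintegral_const, ENNReal.ofReal_mul' measureReal_nonneg, ofReal_measureReal]
  refine coe_ennreal_sub_coe_ennreal_eq_add_coe ?_ ?_
  · refine ne_top_of_le_ne_top ENNReal.ofReal_ne_top ((lintegral_mono fun x => ?_).trans_eq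
      (hconst (-κ)))
    exact posE_neg_coe_add_const_le (g x) κ
  · rw [← neg_mul, ← hconst, ← hconst, ← lintegral_add_right _ measurable_const,
      ← lintegral_add_left measurable_const, ← lintegral_add_left hmeas]
    exact lintegral_congr fun x => posE_coe_add_const (g x) κ

end ShiftedIntegral

section ShiftedCost

lemma lowerSemicontinuous_toENNReal_sub {α : Type*} [TopologicalSpace α] {f : α → EReal}
    (hf : LowerSemicontinuous f) (κ : ℝ) : LowerSemicontinuous fun x => (f x - κ).toENNReal := by
  have hcont : Continuous fun c : EReal => (c - κ).toENNReal :=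
    EReal.continuous_toENNReal.comp <| continuous_iff_continuousAt.2 fun c =>
      (EReal.continuousAt_add (p := (c, -(κ : EReal))) (by simp) (by simp)).comp
        (f := fun c : EReal => (c, -(κ : EReal))) (by fun_prop)
  exact hcont.comp_lowerSemicontinuous hf fun a b hab =>
    EReal.toENNReal_le_toENNReal (EReal.sub_le_sub hab le_rfl)

lemma coe_toENNReal_sub_add_cancel {a : EReal} {κ : ℝ} (h : (κ : EReal) ≤ a) :
    ((a - κ).toENNReal : EReal) + κ = a := by
  rw [EReal.coe_toENNReal (EReal.sub_nonneg (by simp) (by simp) |>.2 h), EReal.sub_add_cancel]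

lemma le_ofReal_mul_add_of_coe_add_le {x y z : ℝ≥0∞} {κ t : ℝ} (ht₀ : 0 ≤ t) (ht₁ : t ≤ 1)
    (h : (z : EReal) + κ ≤ (t : EReal) * (x + κ) + ((1 - t : ℝ) : EReal) * (y + κ)) :
    z ≤ ENNReal.ofReal t * x + ENNReal.ofReal (1 - t) * y := by
  have ht₁' : 0 ≤ 1 - t := sub_nonneg.2 ht₁
  have hκ : (t : EReal) * κ + ((1 - t : ℝ) : EReal) * κ = κ := by
    norm_cast
    ring
  rw [← EReal.coe_ennreal_le_coe_ennreal_iff]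
  refine (EReal.addLECancellable_coe κ).add_le_add_iff_right.1 (h.trans_eq ?_)
  rw [EReal.left_distrib_of_nonneg_of_ne_top (mod_cast ht₀) (EReal.coe_ne_top _),
    EReal.left_distrib_of_nonneg_of_ne_top (mod_cast ht₁') (EReal.coe_ne_top _), add_add_add_comm,
    hκ, EReal.coe_ennreal_add, EReal.coe_ennreal_mul, EReal.coe_ennreal_mul,
    EReal.coe_ennreal_ofReal, EReal.coe_ennreal_ofReal, max_eq_left ht₀, max_eq_left ht₁']

lemma convexOnProb_of_eq_coe_add {Y : Type*} [MeasurableSpace Y] {f : ProbabilityMeasure Y → EReal}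
    {g : ProbabilityMeasure Y → ℝ≥0∞} {κ : ℝ} (hfg : ∀ p, f p = g p + κ)
    (hf : ∀ (p q m : ProbabilityMeasure Y) (t : ℝ), 0 ≤ t → t ≤ 1 →
      (m : Measure Y) = ENNReal.ofReal t • (p : Measure Y)
          + ENNReal.ofReal (1 - t) • (q : Measure Y) →
      f m ≤ (t : EReal) * f p + ((1 - t : ℝ) : EReal) * f q) : ConvexOnProb g := fun p q t => by
  have h := hf p q (convexComb p q t) t t.2.1 t.2.2 rfl
  simp only [hfg] at h
  exact le_ofReal_mul_add_of_coe_add_le t.2.1 t.2.2 h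

variable {X Y : Type*} [TopologicalSpace X] [MeasurableSpace X] [OpensMeasurableSpace X]
  [TopologicalSpace Y] [MeasurableSpace Y] [TopologicalSpace.MetrizableSpace Y]
  [SecondCountableTopology Y] [BorelSpace Y] [StandardBorelSpace Y] [Nonempty Y]

lemma wCost_eq_add_weakCost_add {C : X → ProbabilityMeasure Y → EReal}
    {D : X → ProbabilityMeasure Y → ℝ≥0∞} {κ : ℝ}
    (hD : LowerSemicontinuous fun z : X × ProbabilityMeasure Y => D z.1 z.2)
    (hC : ∀ x p, C x p = D x p + κ) (F₁ F₂ : EntropyFn) (μ₁ : Measure X) (μ₂ : Measure Y)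
    (γ : Measure (X × Y)) [IsFiniteMeasure γ] :
    wCost C F₁ F₂ μ₁ μ₂ γ inferInstance =
      ((entF F₁ γ.fst μ₁ + entF F₂ γ.snd μ₂ + weakCost D γ : ℝ≥0∞) : EReal) +
        ((κ * γ.real univ : ℝ) : EReal) := by
  let _ : MeasurableSpace (ProbabilityMeasure Y) := borel _
  have : BorelSpace (ProbabilityMeasure Y) := ⟨rfl⟩
  have := secondCountableTopology_probabilityMeasure Y
  have hmeas : Measurable fun x => D x (kernelProb γ.condKernel x) :=
    hD.measurable.comp (measurable_id.prodMk (measurable_kernelProb γ.condKernel))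
  have hint := eIntegral_coe_add_const γ.fst hmeas κ
  simp only [← hC, Measure.real, Measure.fst_univ] at hint
  rw [wCost, EReal.coe_ennreal_add, EReal.coe_ennreal_add, add_assoc _ _ (Real.toEReal _)]
  exact congrArg _ hint

end ShiftedCost

lemma exists_forall_le_of_sublevel_subset_isCompact {α β : Type*} [TopologicalSpace α] [Nonempty α]
    [LinearOrder β] [OrderTop β] {f : α → β}
    (h : ∀ c < ⊤, ∃ S, IsCompact S ∧ {x | f x ≤ c} ⊆ S ∧ LowerSemicontinuousOn f S) :
    ∃ x, ∀ y, f x ≤ f y := by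
  by_cases htop : ∀ x, f x = ⊤
  · exact ⟨Classical.arbitrary α, fun y => le_top.trans_eq (htop y).symm⟩
  obtain ⟨x₀, hx₀⟩ := not_forall.1 htop
  obtain ⟨S, hS, hsub, hlsc⟩ := h (f x₀) (lt_top_iff_ne_top.2 hx₀)
  have hx₀S : x₀ ∈ S := hsub le_rfl
  obtain ⟨x, -, hmin⟩ := hlsc.exists_isMinOn ⟨x₀, hx₀S⟩ hS
  refine ⟨x, fun y => ?_⟩
  rcases le_total (f y) (f x₀) with hy | hy
  · exact hmin (hsub hy)
  · exact (hmin hx₀S).trans hy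

section Coercivity

lemma exists_real_le_of_zero_lt_add {r i : EReal} (hr : 0 ≤ r) (h : 0 < r + i) :
    ∃ κ : ℝ, (κ : EReal) ≤ i ∧ 0 < r + κ := by
  induction i with
  | bot => simp at h
  | coe κ => exact ⟨κ, le_rfl, h⟩
  | top => exact ⟨1, le_top, lt_add_of_nonneg_of_lt hr (mod_cast one_pos)⟩

lemma exists_affineMinorants_slope_pos {F₁ F₂ : EntropyFn} {κ : ℝ}
    (h : (0 : EReal) < ((F₁.recC : ℝ≥0∞) : EReal) + ((F₂.recC : ℝ≥0∞) : EReal) + κ) :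
    ∃ p₁ ∈ F₁.affineMinorants, ∃ p₂ ∈ F₂.affineMinorants,
      0 < (p₁.1.toNNReal + p₂.1.toNNReal : ℝ) + κ := by
  rcases lt_or_ge 0 κ with hκ | hκ
  · exact ⟨0, F₁.zero_mem_affineMinorants, 0, F₂.zero_mem_affineMinorants, by simpa using hκ⟩
  have hlt : ENNReal.ofReal (-κ) < F₁.recC + F₂.recC := by
    by_contra! hle
    rw [← EReal.coe_ennreal_le_coe_ennreal_iff, EReal.coe_ennreal_ofReal,
      max_eq_left (neg_nonneg.2 hκ), EReal.coe_ennreal_add] at hle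
    refine h.not_ge ((add_le_add_left hle _).trans_eq ?_)
    rw [← EReal.coe_add, neg_add_cancel, EReal.coe_zero]
  have : Nonempty F₁.affineMinorants := ⟨0, F₁.zero_mem_affineMinorants⟩
  have : Nonempty F₂.affineMinorants := ⟨0, F₂.zero_mem_affineMinorants⟩
  simp only [F₁.recC_eq_iSup, F₂.recC_eq_iSup, ENNReal.iSup_add, ENNReal.add_iSup,
    lt_iSup_iff] at hlt
  obtain ⟨⟨p₂, hp₂⟩, ⟨p₁, hp₁⟩, hlt⟩ := hlt
  have hlt' : -κ < (p₁.1.toNNReal + p₂.1.toNNReal : ℝ≥0) :=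
    Real.toNNReal_lt_iff_lt_coe (neg_nonneg.2 hκ) |>.1 <|
      ENNReal.coe_lt_coe.1 (hlt.trans_eq (ENNReal.coe_add _ _).symm)
  rw [NNReal.coe_add] at hlt'
  exact ⟨p₁, hp₁, p₂, hp₂, by linarith⟩

lemma exists_mul_measure_univ_le_entF_add_entF_add {X Y : Type*} [MeasurableSpace X]
    [MeasurableSpace Y] {F₁ F₂ : EntropyFn} {κ : ℝ}
    (h : (0 : EReal) < ((F₁.recC : ℝ≥0∞) : EReal) + ((F₂.recC : ℝ≥0∞) : EReal) + κ)
    (μ₁ : Measure X) (μ₂ : Measure Y) [IsFiniteMeasure μ₁] [IsFiniteMeasure μ₂] :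
    ∃ a B : ℝ≥0, 0 < a + κ ∧ ∀ γ : Measure (X × Y), ∀ [IsFiniteMeasure γ],
      a * γ univ ≤ entF F₁ γ.fst μ₁ + entF F₂ γ.snd μ₂ + B := by
  obtain ⟨p₁, hp₁, p₂, hp₂, hp⟩ := exists_affineMinorants_slope_pos h
  refine ⟨p₁.1.toNNReal + p₂.1.toNNReal,
    (ENNReal.ofReal p₁.2 * μ₁ univ + ENNReal.ofReal p₂.2 * μ₂ univ).toNNReal,
    by simpa only [NNReal.coe_add] using hp, fun γ _ => ?_⟩
  have h₁ := ofReal_mul_measure_le_entF_add F₁ (γ := γ.fst) (μ := μ₁) hp₁ .univ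
  have h₂ := ofReal_mul_measure_le_entF_add F₂ (γ := γ.snd) (μ := μ₂) hp₂ .univ
  rw [Measure.fst_univ] at h₁
  rw [Measure.snd_univ] at h₂
  rw [ENNReal.coe_toNNReal (by finiteness), ENNReal.coe_add, add_mul]
  exact (add_le_add h₁ h₂).trans_eq (add_add_add_comm _ _ _ _)

lemma exists_forall_le_of_coe_add_mul_le {a : ℝ≥0} {κ : ℝ} (h : 0 < a + κ) (B : ℝ≥0) (c : ℝ) :
    ∃ M : ℝ≥0, ∀ (E : ℝ≥0∞) (m : ℝ≥0), a * m ≤ E + B →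
      (E : EReal) + ((κ * m : ℝ) : EReal) ≤ c → m ≤ M ∧ E ≤ M := by
  set M₀ : ℝ := (c + B) / (a + κ)
  refine ⟨(max M₀ (c + |κ| * M₀)).toNNReal, fun E m hm hE => ?_⟩
  cases E with
  | top =>
    rw [EReal.coe_ennreal_top, EReal.top_add_coe] at hE
    exact absurd (top_le_iff.1 hE) (EReal.coe_ne_top c)
  | coe E =>
    have hm' : (a * m : ℝ) ≤ E + B := mod_cast hm
    have hE' : E + κ * m ≤ c := by
      change ((E + κ * m : ℝ) : EReal) ≤ _ at hE
      exact mod_cast hE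
    have hmM : m ≤ M₀ := (le_div_iff₀ h).2 (by linarith)
    have hκ : -(|κ| * M₀) ≤ κ * m := by
      have := mul_le_mul_of_nonneg_right (neg_abs_le κ) m.coe_nonneg
      have := mul_le_mul_of_nonneg_left hmM (abs_nonneg κ)
      linarith
    refine ⟨NNReal.le_toNNReal_of_coe_le (hmM.trans (le_max_left _ _)), ENNReal.coe_le_coe.2 ?_⟩
    exact NNReal.le_toNNReal_of_coe_le ((by linarith : (E : ℝ) ≤ _).trans (le_max_right _ _))

lemma exists_isCompact_forall_measure_compl_le_of_entF_le {X : Type*} [TopologicalSpace X]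
    [PolishSpace X] [MeasurableSpace X] [BorelSpace X] {F : EntropyFn}
    (hF : F.Superlinear ∨ CompactSpace X) (μ : Measure X) [IsFiniteMeasure μ] (c : ℝ≥0) {ε : ℝ≥0}
    (hε : 0 < ε) : ∃ K : Set X, IsCompact K ∧ ∀ γ : Measure X, ∀ [IsFiniteMeasure γ],
      entF F γ μ ≤ c → γ Kᶜ ≤ ε := by
  rcases hF with hF | hX
  swap
  · exact ⟨univ, isCompact_univ, by simp⟩
  obtain ⟨⟨⟨a, b⟩, hab⟩, ha⟩ : ∃ p : F.affineMinorants,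
      (((c + 1) / ε : ℝ≥0) : ℝ≥0∞) < ENNReal.ofReal p.1.1 := by
    rw [← lt_iSup_iff, ← F.recC_eq_iSup, hF]
    exact ENNReal.coe_lt_top
  obtain ⟨K, hK, hμK⟩ : ∃ K, IsCompact K ∧ ENNReal.ofReal b * μ Kᶜ ≤ 1 := by
    obtain ⟨K, hK, hμK⟩ := isTightMeasureSet_iff_exists_isCompact_measure_compl_le.1
      (isTightMeasureSet_singleton (μ := μ)) (ENNReal.ofReal b)⁻¹ (by simp)
    exact ⟨K, hK, (mul_le_mul_right (hμK μ rfl) _).trans (ENNReal.mul_inv_le_one _)⟩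
  refine ⟨K, hK, fun γ _ hγ => ?_⟩
  have hbound : (((c + 1) / ε : ℝ≥0) : ℝ≥0∞) * γ Kᶜ ≤ ((c + 1) / ε : ℝ≥0) * ε :=
    calc _ ≤ ENNReal.ofReal a * γ Kᶜ := by gcongr
      _ ≤ entF F γ μ + ENNReal.ofReal b * μ Kᶜ :=
        ofReal_mul_measure_le_entF_add F hab hK.isClosed.measurableSet.compl
      _ ≤ c + 1 := add_le_add hγ hμK
      _ = ((c + 1) / ε : ℝ≥0) * ε := by
        rw [← ENNReal.coe_mul, div_mul_cancel₀ _ hε.ne', ENNReal.coe_add, ENNReal.coe_one]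
  have hne : (c + 1) / ε ≠ 0 := by positivity
  exact (ENNReal.mul_le_mul_iff_right (by simpa using hne) ENNReal.coe_ne_top).1 hbound

lemma measure_compl_prod_le {X Y : Type*} [MeasurableSpace X] [MeasurableSpace Y]
    (γ : Measure (X × Y)) {s : Set X} {t : Set Y} (hs : MeasurableSet s) (ht : MeasurableSet t) :
    γ (s ×ˢ t)ᶜ ≤ γ.fst sᶜ + γ.snd tᶜ := by
  rw [compl_prod_eq_union, Measure.fst_apply hs.compl, Measure.snd_apply ht.compl]
  refine (measure_union_le _ _).trans_eq ?_
  simp only [prod_univ, univ_prod]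

lemma tailMoment_le_two {Y : Type*} [MeasurableSpace Y] {K : ℕ → Set Y} {q : Measure Y}
    (h : ∀ n, q (K n)ᶜ ≤ ((1 / 4 : ℝ≥0) ^ n : ℝ≥0)) : tailMoment K q ≤ 2 := by
  have hquarter : (2 : ℝ≥0∞) * (1 / 4 : ℝ≥0) = 2⁻¹ := ENNReal.eq_inv_of_mul_eq_one_left <| by
    exact_mod_cast (by norm_num : (2 : ℝ≥0) * (1 / 4) * 2 = 1)
  calc tailMoment K q ≤ ∑' n, 2 ^ n * (((1 / 4 : ℝ≥0) ^ n : ℝ≥0) : ℝ≥0∞) := by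
        unfold tailMoment; gcongr; exact h _
    _ = ∑' n, 2⁻¹ ^ n := tsum_congr fun n => by
        rw [ENNReal.coe_pow, ← mul_pow, hquarter]
    _ = 2 := by rw [ENNReal.tsum_geometric, ENNReal.one_sub_inv_two, inv_inv]

lemma exists_isCompact_of_entF_le {X Y : Type*} [TopologicalSpace X] [PolishSpace X]
    [MeasurableSpace X] [BorelSpace X] [TopologicalSpace Y] [PolishSpace Y] [MeasurableSpace Y]
    [BorelSpace Y] {F₁ F₂ : EntropyFn} (h₁ : F₁.Superlinear ∨ CompactSpace X)
    (h₂ : F₂.Superlinear ∨ CompactSpace Y) (μ₁ : Measure X) (μ₂ : Measure Y) [IsFiniteMeasure μ₁]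
    [IsFiniteMeasure μ₂] (M : ℝ≥0) :
    ∃ (S : Set (FiniteMeasure (X × Y))) (K : ℕ → Set Y), IsCompact S ∧ (∀ n, IsCompact (K n)) ∧
      (∀ γ : FiniteMeasure (X × Y), γ.mass ≤ M → entF F₁ (γ : Measure (X × Y)).fst μ₁ ≤ M →
        entF F₂ (γ : Measure (X × Y)).snd μ₂ ≤ M → γ ∈ S) ∧
      ∀ γ ∈ S, tailMoment K (γ : Measure (X × Y)).snd ≤ 2 := by
  choose K₁ hK₁ hle₁ using fun n : ℕ => exists_isCompact_forall_measure_compl_le_of_entF_le h₁ μ₁ M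
    (show 0 < (1 / 4 : ℝ≥0) ^ n / 2 by positivity)
  choose K₂ hK₂ hle₂ using fun n : ℕ => exists_isCompact_forall_measure_compl_le_of_entF_le h₂ μ₂ M
    (show 0 < (1 / 4 : ℝ≥0) ^ n / 2 by positivity)
  have hmeas₁ n := (hK₁ n).isClosed.measurableSet
  have hmeas₂ n := (hK₂ n).isClosed.measurableSet
  refine ⟨{γ | γ.mass ≤ M ∧ ∀ n, γ (K₁ n ×ˢ K₂ n)ᶜ ≤ (1 / 4) ^ n}, K₂,
    isCompact_setOfPred_finiteMeasure_mass_le_compl_isCompact_le M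
      (NNReal.tendsto_pow_atTop_nhds_zero_of_lt_one (by bound))
      (fun n => (hK₁ n).prod (hK₂ n)) (Or.inl inferInstance), hK₂,
    fun γ hM hF₁ hF₂ => ⟨hM, fun n => ?_⟩, fun γ hγ => tailMoment_le_two fun n => ?_⟩
  · rw [← ENNReal.coe_le_coe, FiniteMeasure.ennreal_coeFn_eq_coeFn_toMeasure]
    calc (γ : Measure (X × Y)) (K₁ n ×ˢ K₂ n)ᶜ
        ≤ (γ : Measure (X × Y)).fst (K₁ n)ᶜ + (γ : Measure (X × Y)).snd (K₂ n)ᶜ :=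
          measure_compl_prod_le _ (hmeas₁ n) (hmeas₂ n)
      _ ≤ ((1 / 4 : ℝ≥0) ^ n / 2 : ℝ≥0) + ((1 / 4 : ℝ≥0) ^ n / 2 : ℝ≥0) :=
          add_le_add (hle₁ n _ hF₁) (hle₂ n _ hF₂)
      _ = ((1 / 4 : ℝ≥0) ^ n : ℝ≥0) := by rw [← ENNReal.coe_add, add_halves]
  · rw [Measure.snd_apply (hmeas₂ n).compl]
    calc (γ : Measure (X × Y)) (Prod.snd ⁻¹' (K₂ n)ᶜ)
        ≤ (γ : Measure (X × Y)) (K₁ n ×ˢ K₂ n)ᶜ := measure_mono fun z hz hz' => hz hz'.2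
      _ ≤ ((1 / 4 : ℝ≥0) ^ n : ℝ≥0) := by
        rw [← FiniteMeasure.ennreal_coeFn_eq_coeFn_toMeasure]
        exact mod_cast hγ.2 n

end Coercivity

section Existence

variable {X Y : Type*} [TopologicalSpace X] [PolishSpace X] [MeasurableSpace X] [BorelSpace X]
  [TopologicalSpace Y] [PolishSpace Y] [MeasurableSpace Y] [BorelSpace Y] [Nonempty Y]
  {C : X → ProbabilityMeasure Y → EReal} {D : X → ProbabilityMeasure Y → ℝ≥0∞} {κ : ℝ}

lemma lowerSemicontinuousOn_wCost
    (hD : LowerSemicontinuous fun z : X × ProbabilityMeasure Y => D z.1 z.2)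
    (hconv : ∀ x, ConvexOnProb (D x)) (hC : ∀ x p, C x p = D x p + κ) (F₁ F₂ : EntropyFn)
    (μ₁ : Measure X) (μ₂ : Measure Y) [IsFiniteMeasure μ₁] [IsFiniteMeasure μ₂]
    {K : ℕ → Set Y} (hK : ∀ n, IsCompact (K n)) {c : ℝ≥0} :
    LowerSemicontinuousOn
      (fun γ : FiniteMeasure (X × Y) => wCost C F₁ F₂ μ₁ μ₂ (γ : Measure (X × Y)) inferInstance)
      {γ | tailMoment K (γ : Measure (X × Y)).snd ≤ c} := by
  simp only [wCost_eq_add_weakCost_add hD hC]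
  have h₁ : LowerSemicontinuous fun γ : FiniteMeasure (X × Y) =>
      entF F₁ (γ : Measure (X × Y)).fst μ₁ :=
    (lowerSemicontinuous_entF F₁ μ₁).comp (g := fun γ : FiniteMeasure (X × Y) => γ.map Prod.fst)
      (FiniteMeasure.continuous_map continuous_fst)
  have h₂ : LowerSemicontinuous fun γ : FiniteMeasure (X × Y) =>
      entF F₂ (γ : Measure (X × Y)).snd μ₂ :=
    (lowerSemicontinuous_entF F₂ μ₂).comp (g := fun γ : FiniteMeasure (X × Y) => γ.map Prod.snd)
      (FiniteMeasure.continuous_map continuous_snd)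
  have hmass : Continuous fun γ : FiniteMeasure (X × Y) =>
      ((κ * (γ : Measure (X × Y)).real univ : ℝ) : EReal) :=
    continuous_coe_real_ereal.comp <| continuous_const.mul <|
      NNReal.continuous_coe.comp FiniteMeasure.continuous_mass
  refine (continuous_coe_ennreal_ereal.comp_lowerSemicontinuousOn
    (((h₁.add h₂).lowerSemicontinuousOn _).add (lowerSemicontinuousOn_weakCost hD hconv hK))
    fun _ _ => EReal.coe_ennreal_le_coe_ennreal_iff.2).add'
    (hmass.lowerSemicontinuous.lowerSemicontinuousOn _) fun γ _ => ?_
  exact EReal.continuousAt_add (Or.inr (EReal.coe_ne_bot _)) (Or.inr (EReal.coe_ne_top _))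

lemma exists_isCompact_wCost_sublevel
    (hD : LowerSemicontinuous fun z : X × ProbabilityMeasure Y => D z.1 z.2)
    (hC : ∀ x p, C x p = D x p + κ) {F₁ F₂ : EntropyFn}
    (h₁ : F₁.Superlinear ∨ CompactSpace X) (h₂ : F₂.Superlinear ∨ CompactSpace Y)
    (hpos : (0 : EReal) < ((F₁.recC : ℝ≥0∞) : EReal) + ((F₂.recC : ℝ≥0∞) : EReal) + κ)
    (μ₁ : Measure X) (μ₂ : Measure Y) [IsFiniteMeasure μ₁] [IsFiniteMeasure μ₂]
    {c : EReal} (hc : c < ⊤) :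
    ∃ (S : Set (FiniteMeasure (X × Y))) (K : ℕ → Set Y), IsCompact S ∧ (∀ n, IsCompact (K n)) ∧
      {γ : FiniteMeasure (X × Y) |
        wCost C F₁ F₂ μ₁ μ₂ (γ : Measure (X × Y)) inferInstance ≤ c} ⊆ S ∧
      S ⊆ {γ : FiniteMeasure (X × Y) | tailMoment K (γ : Measure (X × Y)).snd ≤ (2 : ℝ≥0)} := by
  obtain ⟨r, hcr, -⟩ := EReal.lt_iff_exists_real_btwn.1 hc
  obtain ⟨a, B, hκ, hmass⟩ := exists_mul_measure_univ_le_entF_add_entF_add hpos μ₁ μ₂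
  obtain ⟨M, hM⟩ := exists_forall_le_of_coe_add_mul_le hκ B r
  obtain ⟨S, K, hS, hK, hsub, htail⟩ := exists_isCompact_of_entF_le h₁ h₂ μ₁ μ₂ M
  refine ⟨S, K, hS, hK, fun γ hγ => ?_, htail⟩
  rw [mem_ofPred_eq, wCost_eq_add_weakCost_add hD hC] at hγ
  have hmass' : a * (γ.mass : ℝ≥0∞) ≤ entF F₁ (γ : Measure (X × Y)).fst μ₁
      + entF F₂ (γ : Measure (X × Y)).snd μ₂ + weakCost D (γ : Measure (X × Y)) + B := by
    rw [γ.ennreal_mass]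
    exact (hmass _).trans (add_le_add_left le_self_add _)
  obtain ⟨hmM, hE⟩ := hM _ γ.mass hmass' (hγ.trans hcr.le)
  have hE' := le_self_add.trans hE
  exact hsub γ hmM (le_self_add.trans hE') (le_add_self.trans hE')

end Existence

lemma EntropyFn.Superlinear.zero_lt_recC_add_add {F : EntropyFn} (hF : F.Superlinear) (r : ℝ≥0∞)
    {i : EReal} (hi : ⊥ < i) : (0 : EReal) < ((F.recC : ℝ≥0∞) : EReal) + (r : EReal) + i := by
  rw [hF, EReal.coe_ennreal_top, EReal.top_add_of_ne_bot (EReal.coe_ennreal_ne_bot r),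
    EReal.top_add_of_ne_bot hi.ne']
  exact EReal.zero_lt_top

theorem stmt6_general {X₁ X₂ : Type*} [TopologicalSpace X₁] [PolishSpace X₁] [MeasurableSpace X₁]
    [BorelSpace X₁] [TopologicalSpace X₂] [PolishSpace X₂] [MeasurableSpace X₂] [BorelSpace X₂]
    [Nonempty X₂] (C : X₁ → ProbabilityMeasure X₂ → EReal)
    (hClsc : LowerSemicontinuous fun q : X₁ × ProbabilityMeasure X₂ => C q.1 q.2)
    (hCconv : ∀ (x : X₁) (p q m : ProbabilityMeasure X₂) (t : ℝ), 0 ≤ t → t ≤ 1 →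
      (m : Measure X₂) = ENNReal.ofReal t • (p : Measure X₂)
          + ENNReal.ofReal (1 - t) • (q : Measure X₂) →
      C x m ≤ (t : EReal) * C x p + ((1 - t : ℝ) : EReal) * C x q)
    (F₁ F₂ : EntropyFn) (μ₁ : Measure X₁) (μ₂ : Measure X₂) [IsFiniteMeasure μ₁]
    [IsFiniteMeasure μ₂] (h₁ : F₁.Superlinear ∨ CompactSpace X₁)
    (h₂ : F₂.Superlinear ∨ CompactSpace X₂)
    (hpos : (0 : EReal) < ((F₁.recC : ℝ≥0∞) : EReal) + ((F₂.recC : ℝ≥0∞) : EReal)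
      + sInf { e : EReal | ∃ (x : X₁) (p : ProbabilityMeasure X₂), e = C x p }) :
    ∃ (γ : Measure (X₁ × X₂)) (hγ : IsFiniteMeasure γ),
      wCost C F₁ F₂ μ₁ μ₂ γ hγ = wOpt C F₁ F₂ μ₁ μ₂ := by
  obtain ⟨κ, hκ, hpos⟩ := exists_real_le_of_zero_lt_add (by positivity) hpos
  let D x p := (C x p - κ).toENNReal
  have hD : LowerSemicontinuous fun z : X₁ × ProbabilityMeasure X₂ => D z.1 z.2 :=
    lowerSemicontinuous_toENNReal_sub hClsc κ
  have hC x p : C x p = D x p + κ :=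
    (coe_toENNReal_sub_add_cancel (hκ.trans (sInf_le ⟨x, p, rfl⟩))).symm
  have hconv x : ConvexOnProb (D x) := convexOnProb_of_eq_coe_add (hC x) (hCconv x)
  obtain ⟨γ, hmin⟩ := exists_forall_le_of_sublevel_subset_isCompact
    (f := fun γ : FiniteMeasure (X₁ × X₂) =>
      wCost C F₁ F₂ μ₁ μ₂ (γ : Measure (X₁ × X₂)) inferInstance) fun c hc => by
      obtain ⟨S, K, hS, hK, hsub, htail⟩ :=
        exists_isCompact_wCost_sublevel hD hC h₁ h₂ hpos μ₁ μ₂ hc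
      exact ⟨S, hS, hsub, (lowerSemicontinuousOn_wCost hD hconv hC F₁ F₂ μ₁ μ₂ hK).mono htail⟩
  refine ⟨γ, inferInstance, le_antisymm (le_sInf ?_) (sInf_le ⟨γ, inferInstance, rfl⟩)⟩
  rintro _ ⟨ν, hν, rfl⟩
  exact hmin ⟨ν, hν⟩

theorem stmt6
    {X₁ : Type*} [MetricSpace X₁] [PolishSpace X₁] [MeasurableSpace X₁] [BorelSpace X₁]
    {X₂ : Type*} [MetricSpace X₂] [PolishSpace X₂] [MeasurableSpace X₂] [BorelSpace X₂]
    [Nonempty X₂]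
    (C : X₁ → ProbabilityMeasure X₂ → EReal)
    (hClsc : LowerSemicontinuous fun q : X₁ × ProbabilityMeasure X₂ => C q.1 q.2)
    (hCbdd : ∃ K : ℝ, ∀ x p, (K : EReal) ≤ C x p)
    (hCconv : ∀ (x : X₁) (p q m : ProbabilityMeasure X₂) (t : ℝ), 0 ≤ t → t ≤ 1 →
      (m : Measure X₂) = ENNReal.ofReal t • (p : Measure X₂)
          + ENNReal.ofReal (1 - t) • (q : Measure X₂) →
      C x m ≤ (t : EReal) * C x p + ((1 - t : ℝ) : EReal) * C x q)
    (F₁ F₂ : EntropyFn)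
    (μ₁ : Measure X₁) (μ₂ : Measure X₂) [IsFiniteMeasure μ₁] [IsFiniteMeasure μ₂]
    (hfeas : ∃ (γ : Measure (X₁ × X₂)) (hγ : IsFiniteMeasure γ),
      wCost C F₁ F₂ μ₁ μ₂ γ hγ < ⊤)
    (hcoer : (F₁.Superlinear ∧ F₂.Superlinear) ∨
      (CompactSpace X₁ ∧ CompactSpace X₂ ∧
        (0 : EReal) < ((F₁.recC : ℝ≥0∞) : EReal) + ((F₂.recC : ℝ≥0∞) : EReal)
          + sInf { e : EReal | ∃ (x : X₁) (p : ProbabilityMeasure X₂), e = C x p })) :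
    ∃ (γ : Measure (X₁ × X₂)) (hγ : IsFiniteMeasure γ),
      wCost C F₁ F₂ μ₁ μ₂ γ hγ = wOpt C F₁ F₂ μ₁ μ₂ := by
  rcases hcoer with ⟨h₁, h₂⟩ | ⟨h₁, h₂, hpos⟩
  · obtain ⟨κ, hκ⟩ := hCbdd
    have hinf : ⊥ < sInf { e : EReal | ∃ (x : X₁) (p : ProbabilityMeasure X₂), e = C x p } :=
      (EReal.bot_lt_coe κ).trans_le (le_sInf fun e ⟨x, p, he⟩ => he ▸ hκ x p)
    exact stmt6_general C hClsc hCconv F₁ F₂ μ₁ μ₂ (.inl h₁) (.inl h₂)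
      (h₁.zero_lt_recC_add_add F₂.recC hinf)
  · exact stmt6_general C hClsc hCconv F₁ F₂ μ₁ μ₂ (.inr h₁) (.inr h₂) hpos
end
end

section
/- Let X₁, X₂ be Polish metric spaces, C : X₁ × 𝒫(X₂) → (−∞,+∞] lower semi-continuous, bounded from below, with C(x₁,·) convex for every x₁, and let F₁, F₂ be admissible entropy functions. If (F₁)'_∞ + (F₂)'_∞ + inf C > 0 then the set Λ is nonempty. If moreover F₁ and F₂ are superlinear, then Λ_R is also nonempty. -/
open MeasureTheory Filter Set Topology
open scoped ENNReal NNReal BoundedContinuousFunction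

noncomputable section

/-!
Both `Λ` and `Λ_R` contain a pair of constants. The coercivity condition yields reals `φᵢ` with
`-φᵢ < (Fᵢ)'_∞` and `φ₁ + φ₂ < inf C`. By convexity `Fᵢ` eventually lies above a line of slope
`-φᵢ`, so `Fᵢ°(φᵢ)` is bounded below by some `ψᵢ < 0`. Hence `(φ₁, φ₂) ∈ Λ`, and
`(ψ₁, ψ₂) ∈ Λ_R` because `ψ ≤ F°(φ)` implies `R*(ψ) ≤ φ`.
-/

lemma exists_real_lt_lt_of_lt_add {a b c : EReal} (h : c < a + b) :
    ∃ x y : ℝ, (x : EReal) < a ∧ (y : EReal) < b ∧ c < ((x + y : ℝ) : EReal) := by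
  contrapose! h
  refine EReal.add_le_of_forall_lt fun x hx y hy => ?_
  induction x with
  | bot => simp
  | top => exact absurd hx not_top_lt
  | coe x =>
    induction y with
    | bot => simp
    | top => exact absurd hy not_top_lt
    | coe y => exact h x y hx hy

lemma exists_real_neg_lt_of_add_add_pos {a b c : EReal} (h : 0 < a + b + c) :
    ∃ x y : ℝ, -(x : EReal) < a ∧ -(y : EReal) < b ∧ ((x + y : ℝ) : EReal) < c := by
  rw [← neg_neg c, ← sub_eq_add_neg, EReal.sub_pos] at h
  obtain ⟨x, y, hx, hy, hxy⟩ := exists_real_lt_lt_of_lt_add h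
  refine ⟨-x, -y, by simpa using hx, by simpa using hy, ?_⟩
  rw [← neg_add, EReal.coe_neg]
  exact EReal.neg_lt_comm.1 hxy

lemma eIntegral_const {α : Type*} [MeasurableSpace α] (μ : Measure α) (c : EReal) :
    eIntegral μ (fun _ => c) = c * ((μ univ : ℝ≥0∞) : EReal) := by
  have posE_eq : posE = EReal.toENNReal := rfl
  simp only [eIntegral, posE_eq, lintegral_const, EReal.coe_ennreal_mul]
  rcases le_total 0 c with hc | hc
  · rw [EReal.coe_toENNReal hc, EReal.toENNReal_of_nonpos (by simpa using hc)]
    simp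
  · rw [EReal.toENNReal_of_nonpos hc, EReal.coe_toENNReal (by simpa using hc)]
    simp

namespace EntropyFn

variable {F : EntropyFn}

lemma affine_le_of_affine_le {a : ℝ≥0∞} {r s t : ℝ} (hr : 0 ≤ r) (hrs : r < s) (hst : s ≤ t)
    (hFr : F.F r ≠ ∞) (h : F.F r + a * ENNReal.ofReal (s - r) ≤ F.F s) :
    F.F r + a * ENNReal.ofReal (t - r) ≤ F.F t := by
  have hrt : 0 < t - r := by linarith
  set l := (s - r) / (t - r)
  have hl0 : 0 < l := div_pos (by linarith) hrt
  have hl1 : l ≤ 1 := (div_le_one hrt).2 (by linarith)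
  have hl_mul : l * (t - r) = s - r := div_mul_cancel₀ _ hrt.ne'
  have hconv : F.F s ≤ ENNReal.ofReal l * F.F t + ENNReal.ofReal (1 - l) * F.F r := by
    have := F.convex' t (by simp only [mem_Ici]; linarith) r hr l hl0.le hl1
    rwa [show l * t + (1 - l) * r = s by linarith] at this
  have hsplit : F.F r + a * ENNReal.ofReal (s - r)
      = ENNReal.ofReal l * (F.F r + a * ENNReal.ofReal (t - r))
        + ENNReal.ofReal (1 - l) * F.F r := by
    have hone : ENNReal.ofReal l + ENNReal.ofReal (1 - l) = 1 := by
      rw [← ENNReal.ofReal_add hl0.le (by linarith), add_sub_cancel, ENNReal.ofReal_one]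
    rw [← hl_mul, ENNReal.ofReal_mul hl0.le]
    nth_rewrite 1 [← one_mul (F.F r)]
    rw [← hone]
    ring
  rw [hsplit] at h
  have hcancel := (ENNReal.add_le_add_iff_right
    (ENNReal.mul_ne_top ENNReal.ofReal_ne_top hFr)).1 (h.trans hconv)
  exact (ENNReal.mul_le_mul_iff_right (by simpa using hl0) ENNReal.ofReal_ne_top).1 hcancel

lemma frequently_affine_le {a : ℝ≥0∞} (ha : a < F.recC) {b : ℝ≥0∞} (hb : b ≠ ∞) :
    ∃ᶠ s in atTop, b + a * ENNReal.ofReal s ≤ F.F s := by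
  obtain ⟨c, hac, hcF⟩ := exists_between ha
  have hfreq : ∃ᶠ s in atTop, c < F.F s / ENNReal.ofReal s :=
    frequently_lt_of_lt_limsup (by isBoundedDefault) hcF
  have htop : Tendsto (fun s : ℝ => (c - a) * ENNReal.ofReal s) atTop (𝓝 ∞) := by
    rw [← ENNReal.mul_top (tsub_pos_of_lt hac).ne']
    exact ENNReal.Tendsto.const_mul ENNReal.tendsto_ofReal_atTop (.inl ENNReal.top_ne_zero)
  refine (hfreq.and_eventually
    ((htop.eventually_const_le hb.lt_top).and (eventually_gt_atTop 0))).mono ?_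
  rintro s ⟨hcs, hbs, hs⟩
  calc b + a * ENNReal.ofReal s
      ≤ (c - a) * ENNReal.ofReal s + a * ENNReal.ofReal s := by gcongr
    _ = c * ENNReal.ofReal s := by rw [← add_mul, tsub_add_cancel_of_le hac.le]
    _ ≤ F.F s := ((ENNReal.lt_div_iff_mul_lt (by simp [hs]) (by simp)).1 hcs).le

lemma exists_eventually_mul_sub_le {a : ℝ≥0∞} (ha : a < F.recC) :
    ∃ r : ℝ, ∀ᶠ s in atTop, a * ENNReal.ofReal (s - r) ≤ F.F s := by
  obtain ⟨r, hr, hFr⟩ := F.dom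
  obtain ⟨s, hs, hrs⟩ :=
    ((frequently_affine_le ha hFr).and_eventually (eventually_gt_atTop r)).exists
  refine ⟨r, (eventually_ge_atTop s).mono fun t hst => ?_⟩
  have hline : F.F r + a * ENNReal.ofReal (s - r) ≤ F.F s := by
    refine le_trans ?_ hs
    gcongr
    linarith
  exact le_add_self.trans (affine_le_of_affine_le hr.le hrs hst hFr hline)

lemma le_mul_add_of_le_mul {φ x s : ℝ} (h : x ≤ φ * s) :
    (x : EReal) ≤ φ * (s : EReal) + F.F s := by
  rw [← EReal.coe_mul]
  exact (EReal.coe_le_coe_iff.2 h).trans (le_add_of_nonneg_right (EReal.coe_ennreal_nonneg _))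

lemma exists_eventually_le_mul_add {φ : ℝ} (hφ : -(φ : EReal) < F.recC) :
    ∃ x : ℝ, ∀ᶠ s : ℝ in atTop, (x : EReal) ≤ φ * (s : EReal) + F.F s := by
  rcases le_or_gt 0 φ with hφ0 | hφ0
  · exact ⟨0, (eventually_ge_atTop 0).mono fun s hs => le_mul_add_of_le_mul (mul_nonneg hφ0 hs)⟩
  have hslope : ENNReal.ofReal (-φ) < F.recC := by
    rw [← EReal.coe_ennreal_lt_coe_ennreal_iff, EReal.coe_ennreal_ofReal,
      max_eq_left (by linarith)]
    exact hφ
  obtain ⟨r, hr⟩ := exists_eventually_mul_sub_le hslope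
  refine ⟨φ * r, (hr.and (eventually_ge_atTop r)).mono fun s ⟨hs, hrs⟩ => ?_⟩
  have hFs : ((-φ * (s - r) : ℝ) : EReal) ≤ F.F s := by
    have := EReal.coe_ennreal_le_coe_ennreal_iff.2 hs
    rwa [← ENNReal.ofReal_mul (by linarith), EReal.coe_ennreal_ofReal,
      max_eq_left (mul_nonneg (neg_nonneg.2 hφ0.le) (sub_nonneg.2 hrs))] at this
  calc ((φ * r : ℝ) : EReal) = ((φ * s + -φ * (s - r) : ℝ) : EReal) := by ring_nf
    _ = φ * (s : EReal) + ((-φ * (s - r) : ℝ) : EReal) := by rw [EReal.coe_add, EReal.coe_mul φ s]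
    _ ≤ φ * (s : EReal) + F.F s := by gcongr

lemma exists_neg_le_circ_of_neg_lt_recC {φ : ℝ} (hφ : -(φ : EReal) < F.recC) :
    ∃ ψ : ℝ, ψ < 0 ∧ (ψ : EReal) ≤ F.circ φ := by
  obtain ⟨x, hx⟩ := exists_eventually_le_mul_add hφ
  obtain ⟨s₀, hs₀⟩ := eventually_atTop.1 hx
  refine ⟨min (min x (-|φ| * s₀)) (-1), by simp, le_iInf fun ⟨s, hs⟩ => ?_⟩
  rcases le_total s₀ s with hss | hss
  · refine le_trans ?_ (hs₀ s hss)
    exact EReal.coe_le_coe_iff.2 ((min_le_left _ _).trans (min_le_left _ _))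
  · refine le_mul_add_of_le_mul ?_
    calc min (min x (-|φ| * s₀)) (-1) ≤ -|φ| * s₀ := (min_le_left _ _).trans (min_le_right _ _)
      _ ≤ -|φ| * s := mul_le_mul_of_nonpos_left hss (by simp)
      _ ≤ φ * s := mul_le_mul_of_nonneg_right (neg_abs_le φ) hs

lemma mem_interior_circDom_of_neg_lt_recC {φ : ℝ} (hφ : -(φ : EReal) < F.recC) :
    φ ∈ interior F.circDom := by
  refine mem_interior.2 ⟨{x : ℝ | -(x : EReal) < F.recC}, fun x hx => ?_, ?_, hφ⟩
  · obtain ⟨ψ, -, hψ⟩ := exists_neg_le_circ_of_neg_lt_recC hx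
    exact ((EReal.bot_lt_coe ψ).trans_le hψ).ne'
  · exact isOpen_lt (continuous_neg.comp continuous_coe_real_ereal) continuous_const

lemma neg_le_recC_of_le_circ {φ ψ : ℝ} (h : (ψ : EReal) ≤ F.circ φ) :
    -(φ : EReal) ≤ F.recC := by
  by_contra! hφ
  obtain ⟨c, hFc, hcφ⟩ := EReal.lt_iff_exists_real_btwn.1 hφ
  have hc0 : 0 < c := EReal.coe_pos.1 ((EReal.coe_ennreal_nonneg _).trans_lt hFc)
  have hφc : φ + c < 0 := by
    rw [← EReal.coe_neg, EReal.coe_lt_coe_iff] at hcφ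
    linarith
  have hlimsup : F.recC < ENNReal.ofReal c := by
    rwa [← EReal.coe_ennreal_lt_coe_ennreal_iff, EReal.coe_ennreal_ofReal, max_eq_left hc0.le]
  obtain ⟨s, hFs, hs, hψs⟩ := ((eventually_lt_of_limsup_lt hlimsup).and
    ((eventually_gt_atTop 0).and ((tendsto_id.const_mul_atTop_of_neg hφc).eventually
      (eventually_lt_atBot ψ)))).exists
  have hFcs : (F.F s : EReal) ≤ ((c * s : ℝ) : EReal) := by
    have := ((ENNReal.div_lt_iff (.inl (by simpa using hs)) (.inl ENNReal.ofReal_ne_top)).1 hFs).le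
    rw [← ENNReal.ofReal_mul hc0.le] at this
    simpa [EReal.coe_ennreal_ofReal, max_eq_left (mul_pos hc0 hs).le] using
      EReal.coe_ennreal_le_coe_ennreal_iff.2 this
  have hle : (ψ : EReal) ≤ (((φ + c) * s : ℝ) : EReal) := by
    rw [add_mul, EReal.coe_add, EReal.coe_mul φ s]
    exact h.trans ((iInf_le _ (⟨s, hs.le⟩ : Ici (0 : ℝ))).trans (by gcongr))
  exact (EReal.coe_le_coe_iff.1 hle).not_gt hψs

lemma revConj_le_of_le_circ {φ ψ : ℝ} (h : (ψ : EReal) ≤ F.circ φ) : F.revConj ψ ≤ φ := by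
  refine iSup_le fun ⟨r, hr⟩ => ?_
  rcases (mem_Ici.1 hr).eq_or_lt with rfl | hr
  · simpa [revF] using EReal.neg_le_of_neg_le (neg_le_recC_of_le_circ h)
  refine EReal.sub_le_of_le_add ?_
  have hle : (ψ : EReal) ≤ φ * ((1 / r : ℝ) : EReal) + F.F (1 / r) :=
    h.trans (iInf_le _ (⟨1 / r, by simpa using hr.le⟩ : Ici (0 : ℝ)))
  calc ((r * ψ : ℝ) : EReal) = (r : EReal) * ψ := EReal.coe_mul r ψ
    _ ≤ r * (φ * ((1 / r : ℝ) : EReal) + F.F (1 / r)) := by gcongr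
    _ = r * (φ * ((1 / r : ℝ) : EReal)) + r * F.F (1 / r) :=
        EReal.left_distrib_of_nonneg_of_ne_top (by exact_mod_cast hr.le) (EReal.coe_ne_top r) _ _
    _ = φ + F.revF r := by
        rw [← EReal.coe_mul, ← EReal.coe_mul, show r * (φ * (1 / r)) = φ by field_simp, revF,
          if_pos hr, EReal.coe_ennreal_mul, EReal.coe_ennreal_ofReal, max_eq_left hr.le]

end EntropyFn

section Constants

variable {X₁ X₂ : Type*} [TopologicalSpace X₁] [TopologicalSpace X₂] [MeasurableSpace X₂]
  {C : X₁ → ProbabilityMeasure X₂ → EReal} {F₁ F₂ : EntropyFn}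

lemma const_mem_lamSet {φ₁ φ₂ : ℝ} (h₁ : φ₁ ∈ interior F₁.circDom)
    (h₂ : φ₂ ∈ interior F₂.circDom) (hC : ∀ x p, ((φ₁ + φ₂ : ℝ) : EReal) ≤ C x p) :
    (BoundedContinuousFunction.const X₁ φ₁, BoundedContinuousFunction.const X₂ φ₂)
      ∈ lamSet C F₁ F₂ :=
  ⟨fun _ => h₁, fun _ => h₂, fun x p => by simpa using hC x p⟩

lemma const_mem_lamRSet {ψ₁ ψ₂ : ℝ} (h₁ : (ψ₁ : EReal) < F₁.F 0) (h₂ : (ψ₂ : EReal) < F₂.F 0)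
    (hC : ∀ x p, F₁.revConj ψ₁ + F₂.revConj ψ₂ ≤ C x p) :
    (BoundedContinuousFunction.const X₁ ψ₁, BoundedContinuousFunction.const X₂ ψ₂)
      ∈ lamRSet C F₁ F₂ :=
  ⟨⟨ψ₁, h₁, fun _ => le_rfl⟩, ⟨ψ₂, h₂, fun _ => le_rfl⟩, fun x p => by
    simpa [eIntegral_const] using hC x p⟩

end Constants

theorem stmt7_general
    {X₁ : Type*} [TopologicalSpace X₁]
    {X₂ : Type*} [TopologicalSpace X₂] [MeasurableSpace X₂]
    (C : X₁ → ProbabilityMeasure X₂ → EReal) (F₁ F₂ : EntropyFn)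
    (hcoer : (0 : EReal) < ((F₁.recC : ℝ≥0∞) : EReal) + ((F₂.recC : ℝ≥0∞) : EReal)
        + sInf { e : EReal | ∃ (x : X₁) (p : ProbabilityMeasure X₂), e = C x p }) :
    (lamSet C F₁ F₂).Nonempty ∧ (lamRSet C F₁ F₂).Nonempty := by
  obtain ⟨φ₁, φ₂, hφ₁, hφ₂, hlt⟩ := exists_real_neg_lt_of_add_add_pos hcoer
  have hC : ∀ x p, ((φ₁ + φ₂ : ℝ) : EReal) ≤ C x p := fun x p =>
    hlt.le.trans (sInf_le ⟨x, p, rfl⟩)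
  obtain ⟨ψ₁, hψ₁, hcirc₁⟩ := EntropyFn.exists_neg_le_circ_of_neg_lt_recC hφ₁
  obtain ⟨ψ₂, hψ₂, hcirc₂⟩ := EntropyFn.exists_neg_le_circ_of_neg_lt_recC hφ₂
  have hrev : F₁.revConj ψ₁ + F₂.revConj ψ₂ ≤ ((φ₁ + φ₂ : ℝ) : EReal) :=
    add_le_add (EntropyFn.revConj_le_of_le_circ hcirc₁) (EntropyFn.revConj_le_of_le_circ hcirc₂)
  have lt_coe_ennreal {ψ : ℝ} (hψ : ψ < 0) (c : ℝ≥0∞) : (ψ : EReal) < c :=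
    (EReal.coe_neg'.2 hψ).trans_le (EReal.coe_ennreal_nonneg c)
  exact ⟨⟨_, const_mem_lamSet (EntropyFn.mem_interior_circDom_of_neg_lt_recC hφ₁)
      (EntropyFn.mem_interior_circDom_of_neg_lt_recC hφ₂) hC⟩,
    ⟨_, const_mem_lamRSet (lt_coe_ennreal hψ₁ _) (lt_coe_ennreal hψ₂ _)
      fun x p => hrev.trans (hC x p)⟩⟩

theorem stmt7
    {X₁ : Type*} [MetricSpace X₁] [PolishSpace X₁] [MeasurableSpace X₁] [BorelSpace X₁]
    {X₂ : Type*} [MetricSpace X₂] [PolishSpace X₂] [MeasurableSpace X₂] [BorelSpace X₂]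
    [Nonempty X₂]
    (C : X₁ → ProbabilityMeasure X₂ → EReal)
    (hClsc : LowerSemicontinuous fun q : X₁ × ProbabilityMeasure X₂ => C q.1 q.2)
    (hCbdd : ∃ K : ℝ, ∀ x p, (K : EReal) ≤ C x p)
    (hCconv : ∀ (x : X₁) (p q m : ProbabilityMeasure X₂) (t : ℝ), 0 ≤ t → t ≤ 1 →
      (m : Measure X₂) = ENNReal.ofReal t • (p : Measure X₂)
          + ENNReal.ofReal (1 - t) • (q : Measure X₂) →
      C x m ≤ (t : EReal) * C x p + ((1 - t : ℝ) : EReal) * C x q)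
    (F₁ F₂ : EntropyFn)
    (hcoer : (0 : EReal) < ((F₁.recC : ℝ≥0∞) : EReal) + ((F₂.recC : ℝ≥0∞) : EReal)
        + sInf { e : EReal | ∃ (x : X₁) (p : ProbabilityMeasure X₂), e = C x p }) :
    (lamSet C F₁ F₂).Nonempty ∧
      (F₁.Superlinear → F₂.Superlinear → (lamRSet C F₁ F₂).Nonempty) := by
  obtain ⟨hΛ, hΛR⟩ := stmt7_general C F₁ F₂ hcoer
  exact ⟨hΛ, fun _ _ => hΛR⟩
end
end

section
/- Let X₁, X₂ be Polish metric spaces, C : X₁ × 𝒫(X₂) → (−∞,+∞] lower semi-continuous, bounded from below, with C(x₁,·) convex for every x₁, F₁, F₂ admissible entropy functions with (F₁)'_∞ + (F₂)'_∞ + inf C > 0. Then for every μ₁ ∈ ℳ(X₁), μ₂ ∈ ℳ(X₂): ℰ_C(μ₁,μ₂) ≥ sup_{(φ₁,φ₂)∈Λ} Σ_{i=1}^2 ∫_{X_i} F_i°(φ_i) dμ_i; in particular the functional γ ↦ ℰ_C(γ|μ₁,μ₂) is bounded from below on ℳ(X₁×X₂). -/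
open MeasureTheory Filter Set Topology
open scoped ENNReal NNReal BoundedContinuousFunction

noncomputable section

/-!
Weak duality is the Fenchel–Young inequality `F°(φ) ≤ φ s + F(s)` evaluated at `s = dγᵢ/dμᵢ` and
integrated against `μᵢ`. The part of `γᵢ` singular to `μᵢ` is controlled because `F°(φ) > -∞`
forces `φ ≥ -F'_∞`, and the constraint of `Λ`, integrated along the disintegration of `γ`, bounds
`∫ φ₁ dγ₁ + ∫ φ₂ dγ₂` by the transport term. For the uniform lower bound, coercivity leaves room
for constants `φᵢ > -(Fᵢ)'_∞` with `φ₁ + φ₂ ≤ inf C`, and every such constant lies in the domain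
of `Fᵢ°`; weak duality for this single pair bounds the cost below independently of `γ`.
-/

lemma exists_neg_lt_and_neg_lt_and_add_le {a b m : EReal} (h : 0 < a + b + m) :
    ∃ r s : ℝ, ((-r : ℝ) : EReal) < a ∧ ((-s : ℝ) : EReal) < b ∧ ((r + s : ℝ) : EReal) ≤ m := by
  have neg_lt : -m < a + b := by
    rwa [← zero_sub, EReal.sub_lt_iff (.inr EReal.zero_ne_bot) (.inr EReal.zero_ne_top)]
  obtain ⟨a', ha, b', hb, hab⟩ : ∃ a' < a, ∃ b' < b, -m < a' + b' := by
    by_contra! hle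
    exact neg_lt.not_ge (EReal.add_le_of_forall_lt hle)
  obtain ⟨ha', hb'⟩ := EReal.add_ne_bot_iff.1 hab.ne_bot
  lift a' to ℝ using ⟨ha.ne_top, ha'⟩
  lift b' to ℝ using ⟨hb.ne_top, hb'⟩
  refine ⟨-a', -b', by rwa [neg_neg], by rwa [neg_neg], ?_⟩
  rw [← neg_add, EReal.coe_neg, EReal.coe_add]
  exact (EReal.neg_lt_comm.1 hab).le

section EIntegral

variable {α : Type*} [MeasurableSpace α] {μ : Measure α}

lemma posE_eq_toENNReal (a : EReal) : posE a = a.toENNReal := rfl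

lemma eIntegral_mono_ae {f g : α → EReal} (h : f ≤ᵐ[μ] g) : eIntegral μ f ≤ eIntegral μ g :=
  EReal.sub_le_sub
    (EReal.coe_ennreal_le_coe_ennreal_iff.2 <|
      lintegral_mono_ae <| h.mono fun _ hx ↦ EReal.toENNReal_le_toENNReal hx)
    (EReal.coe_ennreal_le_coe_ennreal_iff.2 <|
      lintegral_mono_ae <| h.mono fun _ hx ↦
        EReal.toENNReal_le_toENNReal (EReal.neg_le_neg_iff.2 hx))

lemma eIntegral_coe {h : α → ℝ} (hh : Integrable h μ) :
    eIntegral μ (fun x ↦ (h x : EReal)) = ((∫ x, h x ∂μ : ℝ) : EReal) := by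
  rw [integral_eq_lintegral_pos_part_sub_lintegral_neg_part hh, EReal.coe_sub,
    EReal.coe_ennreal_toReal hh.lintegral_lt_top.ne,
    EReal.coe_ennreal_toReal (Integrable.lintegral_lt_top hh.fun_neg).ne]
  simp only [eIntegral, posE_eq_toENNReal, ← EReal.coe_neg, EReal.real_coe_toENNReal]

lemma eIntegral_coe_add_coe_ennreal_le {h : α → ℝ} {g : α → ℝ≥0∞} (hh : Integrable h μ)
    (hg : AEMeasurable g μ) :
    eIntegral μ (fun x ↦ (h x : EReal) + g x) ≤
      ((∫ x, h x ∂μ : ℝ) : EReal) + ((∫⁻ x, g x ∂μ : ℝ≥0∞) : EReal) := by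
  by_cases hfin : ∫⁻ x, g x ∂μ = ∞
  · simp [hfin]
  have g_lt_top : ∀ᵐ x ∂μ, g x < ∞ := ae_lt_top' hg hfin
  have g_int : Integrable (fun x ↦ (g x).toReal) μ := integrable_toReal_of_lintegral_ne_top hg hfin
  calc eIntegral μ (fun x ↦ (h x : EReal) + g x)
      ≤ eIntegral μ (fun x ↦ ((h x + (g x).toReal : ℝ) : EReal)) :=
        eIntegral_mono_ae <| g_lt_top.mono fun x hx ↦ by
          simp only [EReal.coe_add, EReal.coe_ennreal_toReal hx.ne, le_refl]
    _ = ((∫ x, h x ∂μ : ℝ) : EReal) + ((∫⁻ x, g x ∂μ : ℝ≥0∞) : EReal) := by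
        rw [eIntegral_coe (hh.fun_add g_int), integral_add hh g_int, integral_toReal hg g_lt_top,
          EReal.coe_add, EReal.coe_ennreal_toReal hfin]

lemma eIntegral_const_ne_bot [IsFiniteMeasure μ] {c : EReal} (hc : c ≠ ⊥) :
    eIntegral μ (fun _ ↦ c) ≠ ⊥ := by
  obtain ⟨r, -, hr⟩ := EReal.exists_between_coe_real (bot_lt_iff_ne_bot.2 hc)
  refine ne_bot_of_le_ne_bot (EReal.coe_ne_bot (∫ _, r ∂μ)) ?_
  rw [← eIntegral_coe (integrable_const r)]
  exact eIntegral_mono_ae (.of_forall fun _ ↦ hr.le)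

end EIntegral

lemma frequently_add_mul_le_of_lt_recessionOf {G : ℝ → ℝ≥0∞} {a c : ℝ≥0∞}
    (ha : a < recessionOf G) (hc : c ≠ ∞) :
    ∃ᶠ s : ℝ in atTop, c + a * ENNReal.ofReal s ≤ G s := by
  obtain ⟨b, hab, hb⟩ := exists_between ha
  have slope_tendsto : Tendsto (fun s : ℝ ↦ c / ENNReal.ofReal s + a) atTop (𝓝 a) := by
    simpa using (ENNReal.Tendsto.const_div ENNReal.tendsto_ofReal_atTop
      (.inr hc)).add (tendsto_const_nhds (x := a))
  have b_lt : ∃ᶠ s : ℝ in atTop, b < G s / ENNReal.ofReal s := frequently_lt_of_lt_limsup (h := hb)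
  refine (b_lt.and_eventually ((slope_tendsto.eventually_lt_const hab).and
    (eventually_gt_atTop 0))).mono ?_
  rintro s ⟨hbs, hsb, hs⟩
  have hs₀ : ENNReal.ofReal s ≠ 0 := by simpa using hs
  calc c + a * ENNReal.ofReal s = (c / ENNReal.ofReal s + a) * ENNReal.ofReal s := by
        rw [add_mul, ENNReal.div_mul_cancel hs₀ ENNReal.ofReal_ne_top]
    _ ≤ G s / ENNReal.ofReal s * ENNReal.ofReal s := by gcongr; exact (hsb.trans hbs).le
    _ = G s := ENNReal.div_mul_cancel hs₀ ENNReal.ofReal_ne_top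

namespace EntropyFn

variable (F : EntropyFn) {φ : ℝ}

lemma coe_le_circ_iff {A : ℝ} :
    (A : EReal) ≤ F.circ φ ↔ ∀ s, 0 ≤ s → ENNReal.ofReal (A - φ * s) ≤ F.F s := by
  simp only [circ, le_iInf_iff, Subtype.forall, mem_Ici]
  refine forall₂_congr fun s _ ↦ ?_
  by_cases hs : F.F s = ∞
  · simp [hs, ← EReal.coe_mul]
  · rw [← EReal.coe_mul, ← EReal.coe_ennreal_toReal hs, ← EReal.coe_add, EReal.coe_le_coe_iff,
      ENNReal.ofReal_le_iff_le_toReal hs, sub_le_iff_le_add']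

lemma mem_circDom_iff :
    φ ∈ F.circDom ↔ ∃ A : ℝ, ∀ s, 0 ≤ s → ENNReal.ofReal (A - φ * s) ≤ F.F s := by
  simp only [← coe_le_circ_iff]
  refine ⟨fun h ↦ ?_, fun ⟨A, hA⟩ ↦ ((EReal.bot_lt_coe A).trans_le hA).ne'⟩
  obtain ⟨A, -, hA⟩ := EReal.exists_between_coe_real (bot_lt_iff_ne_bot.2 h)
  exact ⟨A, hA.le⟩

lemma ofReal_neg_le_recC_of_mem_circDom (h : φ ∈ F.circDom) : ENNReal.ofReal (-φ) ≤ F.recC := by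
  obtain ⟨A, hA⟩ := F.mem_circDom_iff.1 h
  have slope_tendsto :
      Tendsto (fun s : ℝ ↦ ENNReal.ofReal (A / s - φ)) atTop (𝓝 (ENNReal.ofReal (-φ))) := by
    refine ENNReal.tendsto_ofReal ?_
    simpa using (tendsto_const_nhds (x := A).div_atTop tendsto_id).sub_const φ
  rw [← slope_tendsto.limsup_eq]
  refine limsup_le_limsup ?_
  filter_upwards [eventually_gt_atTop 0] with s hs
  calc ENNReal.ofReal (A / s - φ) = ENNReal.ofReal (A - φ * s) / ENNReal.ofReal s := by
        rw [← ENNReal.ofReal_div_of_pos hs, sub_div, mul_div_cancel_right₀ φ hs.ne']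
    _ ≤ F.F s / ENNReal.ofReal s := by gcongr; exact hA s hs.le

/- Convexity at `s₁`, written as a convex combination of `s₀` and `s` with weight
`u = (s₁ - s₀) / (s - s₀)` on `s`; the surplus `F s₀` absorbs the contribution of `s₀`. -/
lemma mul_ofReal_le_of_add_mul_ofReal_le {a : ℝ≥0∞} {s₀ s₁ s : ℝ} (hs₀ : 0 ≤ s₀)
    (h₀₁ : s₀ < s₁) (h₁ : s₁ ≤ s) (hF₀ : F.F s₀ ≠ ∞)
    (h : F.F s₀ + a * ENNReal.ofReal s₁ ≤ F.F s₁) : a * ENNReal.ofReal s ≤ F.F s := by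
  have hs : 0 < s - s₀ := by linarith
  set u : ℝ := (s₁ - s₀) / (s - s₀) with hu
  have u_pos : 0 < u := div_pos (by linarith) hs
  have u_le_one : u ≤ 1 := (div_le_one hs).2 (by linarith)
  have combination : (1 - u) * s₀ + (1 - (1 - u)) * s = s₁ := by
    rw [hu]; field_simp; ring
  have u_mul_le : u * s ≤ s₁ := by nlinarith
  have convexity : F.F s₁ ≤ F.F s₀ + ENNReal.ofReal u * F.F s := by
    have := F.convex' s₀ hs₀ s (hs₀.trans (h₀₁.le.trans h₁)) (1 - u) (by linarith) (by linarith)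
    rw [combination, sub_sub_cancel] at this
    refine this.trans (add_le_add_left (mul_le_of_le_one_left' ?_) _)
    exact ENNReal.ofReal_le_one.2 (by linarith)
  refine (ENNReal.mul_le_mul_iff_right (a := ENNReal.ofReal u) (by simpa using u_pos)
    ENNReal.ofReal_ne_top).1 ?_
  calc ENNReal.ofReal u * (a * ENNReal.ofReal s) = a * ENNReal.ofReal (u * s) := by
        rw [ENNReal.ofReal_mul u_pos.le, mul_left_comm]
    _ ≤ a * ENNReal.ofReal s₁ := by gcongr
    _ ≤ ENNReal.ofReal u * F.F s := (ENNReal.add_le_add_iff_left hF₀).1 (h.trans convexity)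

lemma eventually_mul_ofReal_le_of_lt_recC {a : ℝ≥0∞} (ha : a < F.recC) :
    ∀ᶠ s : ℝ in atTop, a * ENNReal.ofReal s ≤ F.F s := by
  obtain ⟨s₀, hs₀, hF₀⟩ := F.dom
  obtain ⟨s₁, h, h₀₁⟩ := ((frequently_add_mul_le_of_lt_recessionOf ha hF₀).and_eventually
    (eventually_gt_atTop s₀)).exists
  filter_upwards [eventually_ge_atTop s₁] with s h₁
  exact F.mul_ofReal_le_of_add_mul_ofReal_le hs₀.le h₀₁ h₁ hF₀ h

lemma mem_circDom_of_neg_lt_recC (h : ((-φ : ℝ) : EReal) < F.recC) : φ ∈ F.circDom := by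
  rw [mem_circDom_iff]
  rcases le_or_gt 0 φ with hφ | hφ
  · refine ⟨0, fun s hs ↦ ?_⟩
    rw [ENNReal.ofReal_of_nonpos (by nlinarith)]
    exact zero_le
  have ofReal_lt : ENNReal.ofReal (-φ) < F.recC := by
    rwa [← EReal.coe_ennreal_lt_coe_ennreal_iff, EReal.coe_ennreal_ofReal,
      max_eq_left (by linarith)]
  obtain ⟨s₁, hs₁⟩ := eventually_atTop.1 (F.eventually_mul_ofReal_le_of_lt_recC ofReal_lt)
  refine ⟨φ * max s₁ 0, fun s _ ↦ ?_⟩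
  rcases le_total s (max s₁ 0) with hle | hge
  · rw [ENNReal.ofReal_of_nonpos (by nlinarith)]
    exact zero_le
  · calc ENNReal.ofReal (φ * max s₁ 0 - φ * s) ≤ ENNReal.ofReal (-φ * s) :=
          ENNReal.ofReal_le_ofReal (by nlinarith [le_max_right s₁ 0])
      _ = ENNReal.ofReal (-φ) * ENNReal.ofReal s := ENNReal.ofReal_mul (by linarith)
      _ ≤ F.F s := hs₁ s ((le_max_left _ _).trans hge)

lemma measurable_comp {α : Type*} [MeasurableSpace α] {f : α → ℝ} (hf : Measurable f)
    (hf₀ : ∀ x, 0 ≤ f x) : Measurable fun x ↦ F.F (f x) :=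
  (lowerSemicontinuous_restrict_iff.2 F.lsc).measurable.comp (hf.subtype_mk (h := hf₀))

end EntropyFn

section EntropyInequality

variable {X : Type*} [MeasurableSpace X] (F : EntropyFn) {φ : X → ℝ}

lemma eIntegral_circ_le_integral_mul_add_lintegral {μ : Measure X} {f : X → ℝ} (hf : Measurable f)
    (hf₀ : ∀ x, 0 ≤ f x) (hfφ : Integrable (fun x ↦ f x * φ x) μ) :
    eIntegral μ (fun x ↦ F.circ (φ x)) ≤
      ((∫ x, f x * φ x ∂μ : ℝ) : EReal) + ((∫⁻ x, F.F (f x) ∂μ : ℝ≥0∞) : EReal) := by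
  refine le_trans (eIntegral_mono_ae (.of_forall fun x ↦ ?_))
    (eIntegral_coe_add_coe_ennreal_le hfφ (F.measurable_comp hf hf₀).aemeasurable)
  refine (iInf_le _ (⟨f x, hf₀ x⟩ : Ici (0 : ℝ))).trans_eq ?_
  rw [mul_comm (f x), EReal.coe_mul]

lemma zero_le_integral_add_recC_mul {σ : Measure X} (hφ : Integrable φ σ)
    (hdom : ∀ x, φ x ∈ F.circDom) :
    0 ≤ ((∫ x, φ x ∂σ : ℝ) : EReal) + ((F.recC * σ univ : ℝ≥0∞) : EReal) := by
  have pointwise (x : X) : (0 : EReal) ≤ (φ x : EReal) + F.recC := by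
    have : ((-φ x : ℝ) : EReal) ≤ F.recC := by
      refine le_trans ?_ (EReal.coe_ennreal_le_coe_ennreal_iff.2
        (F.ofReal_neg_le_recC_of_mem_circDom (hdom x)))
      rw [EReal.coe_ennreal_ofReal]
      exact_mod_cast le_max_left _ _
    calc (0 : EReal) = (φ x : EReal) + ((-φ x : ℝ) : EReal) := by
          rw [← EReal.coe_add, add_neg_cancel, EReal.coe_zero]
      _ ≤ (φ x : EReal) + F.recC := by gcongr
  calc (0 : EReal) = eIntegral σ (fun _ ↦ 0) := by
        simpa using (eIntegral_coe (integrable_zero X ℝ σ)).symm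
    _ ≤ eIntegral σ (fun x ↦ (φ x : EReal) + F.recC) := eIntegral_mono_ae (.of_forall pointwise)
    _ ≤ _ := by
        simpa using eIntegral_coe_add_coe_ennreal_le hφ (aemeasurable_const (b := F.recC))

variable {γ μ : Measure X} [SigmaFinite γ]

lemma integrable_toReal_rnDeriv_mul (hφ : Integrable φ γ) :
    Integrable (fun x ↦ (γ.rnDeriv μ x).toReal * φ x) μ :=
  (integrable_withDensity_iff_integrable_smul' (Measure.measurable_rnDeriv γ μ)
    (Measure.rnDeriv_lt_top γ μ)).1 (hφ.mono_measure (Measure.withDensity_rnDeriv_le γ μ))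

variable [γ.HaveLebesgueDecomposition μ]

lemma integral_singularPart_add_integral_rnDeriv_mul (hφ : Integrable φ γ) :
    ∫ x, φ x ∂(γ.singularPart μ) + ∫ x, (γ.rnDeriv μ x).toReal * φ x ∂μ = ∫ x, φ x ∂γ := by
  have hac := integral_withDensity_eq_integral_toReal_smul (Measure.measurable_rnDeriv γ μ)
    (Measure.rnDeriv_lt_top γ μ) φ
  simp only [smul_eq_mul] at hac
  rw [← hac, ← integral_add_measure (hφ.mono_measure (Measure.singularPart_le γ μ))
    (hφ.mono_measure (Measure.withDensity_rnDeriv_le γ μ)), Measure.singularPart_add_rnDeriv]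

theorem eIntegral_circ_le_entF_add_integral (hφ : Integrable φ γ) (hdom : ∀ x, φ x ∈ F.circDom) :
    eIntegral μ (fun x ↦ F.circ (φ x)) ≤
      ((entF F γ μ : ℝ≥0∞) : EReal) + ((∫ x, φ x ∂γ : ℝ) : EReal) := by
  have abs_cont := eIntegral_circ_le_integral_mul_add_lintegral F
    (Measure.measurable_rnDeriv γ μ).ennreal_toReal (fun _ ↦ ENNReal.toReal_nonneg)
    (integrable_toReal_rnDeriv_mul hφ)
  have singular := zero_le_integral_add_recC_mul F
    (hφ.mono_measure (Measure.singularPart_le γ μ)) hdom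
  have := add_le_add singular abs_cont
  rwa [zero_add, add_add_add_comm, ← EReal.coe_add,
    integral_singularPart_add_integral_rnDeriv_mul hφ, ← EReal.coe_ennreal_add,
    add_comm (F.recC * _), add_comm] at this

end EntropyInequality

section WeakDuality

variable {X₁ X₂ : Type*} [MeasurableSpace X₁] [MeasurableSpace X₂] [StandardBorelSpace X₂]
  [Nonempty X₂] {C : X₁ → ProbabilityMeasure X₂ → EReal} {F₁ F₂ : EntropyFn}
  {μ₁ : Measure X₁} {μ₂ : Measure X₂}

lemma integral_fst_add_integral_snd_le_eIntegral_condKernel {γ : Measure (X₁ × X₂)}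
    [IsFiniteMeasure γ] {φ₁ : X₁ → ℝ} {φ₂ : X₂ → ℝ}
    (hφ₁ : Integrable φ₁ γ.fst) (hφ₂ : Integrable φ₂ γ.snd)
    (hC : ∀ x₁ (p : ProbabilityMeasure X₂),
      ((φ₁ x₁ + ∫ x₂, φ₂ x₂ ∂(p : Measure X₂) : ℝ) : EReal) ≤ C x₁ p) :
    (((∫ x, φ₁ x ∂γ.fst) + ∫ x, φ₂ x ∂γ.snd : ℝ) : EReal) ≤
      eIntegral γ.fst (fun x₁ ↦ C x₁ ⟨γ.condKernel x₁, inferInstance⟩) := by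
  have snd_int : Integrable (fun q : X₁ × X₂ ↦ φ₂ q.2) γ := hφ₂.comp_measurable measurable_snd
  have disintegration :
      ∫ x, ∫ y, φ₂ y ∂γ.condKernel x ∂γ.fst = ∫ y, φ₂ y ∂γ.snd := by
    rw [Measure.integral_condKernel snd_int, Measure.snd,
      integral_map measurable_snd.aemeasurable hφ₂.aestronglyMeasurable]
  have cond_int : Integrable (fun x ↦ ∫ y, φ₂ y ∂γ.condKernel x) γ.fst :=
    snd_int.integral_condKernel
  rw [← disintegration, ← integral_add hφ₁ cond_int, ← eIntegral_coe (hφ₁.fun_add cond_int)]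
  exact eIntegral_mono_ae (.of_forall fun x ↦ hC x ⟨γ.condKernel x, inferInstance⟩)

theorem eIntegral_circ_add_eIntegral_circ_le_wCost [SigmaFinite μ₁] [SigmaFinite μ₂]
    {γ : Measure (X₁ × X₂)} [hγ : IsFiniteMeasure γ] {φ₁ : X₁ → ℝ} {φ₂ : X₂ → ℝ}
    (hφ₁ : Integrable φ₁ γ.fst) (hφ₂ : Integrable φ₂ γ.snd)
    (hdom₁ : ∀ x, φ₁ x ∈ F₁.circDom) (hdom₂ : ∀ x, φ₂ x ∈ F₂.circDom)
    (hC : ∀ x₁ (p : ProbabilityMeasure X₂),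
      ((φ₁ x₁ + ∫ x₂, φ₂ x₂ ∂(p : Measure X₂) : ℝ) : EReal) ≤ C x₁ p) :
    eIntegral μ₁ (fun x ↦ F₁.circ (φ₁ x)) + eIntegral μ₂ (fun x ↦ F₂.circ (φ₂ x)) ≤
      wCost C F₁ F₂ μ₁ μ₂ γ hγ := by
  refine (add_le_add (eIntegral_circ_le_entF_add_integral F₁ hφ₁ hdom₁)
    (eIntegral_circ_le_entF_add_integral F₂ hφ₂ hdom₂)).trans ?_
  rw [add_add_add_comm, ← EReal.coe_add]
  exact add_le_add_right
    (integral_fst_add_integral_snd_le_eIntegral_condKernel hφ₁ hφ₂ hC) _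

theorem sSup_eIntegral_circ_le_wOpt [TopologicalSpace X₁] [OpensMeasurableSpace X₁]
    [TopologicalSpace X₂] [OpensMeasurableSpace X₂] [SigmaFinite μ₁] [SigmaFinite μ₂] :
    sSup {e : EReal | ∃ φ ∈ lamSet C F₁ F₂,
      e = eIntegral μ₁ (fun x ↦ F₁.circ (φ.1 x)) + eIntegral μ₂ (fun x ↦ F₂.circ (φ.2 x))} ≤
      wOpt C F₁ F₂ μ₁ μ₂ := by
  refine sSup_le ?_
  rintro _ ⟨φ, ⟨hdom₁, hdom₂, hC⟩, rfl⟩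
  refine le_sInf ?_
  rintro _ ⟨γ, hγ, rfl⟩
  exact eIntegral_circ_add_eIntegral_circ_le_wCost (φ.1.integrable _) (φ.2.integrable _)
    (fun x ↦ interior_subset (hdom₁ x)) (fun x ↦ interior_subset (hdom₂ x)) hC

theorem exists_forall_coe_le_wCost [IsFiniteMeasure μ₁] [IsFiniteMeasure μ₂]
    (hcoer : (0 : EReal) < (F₁.recC : EReal) + (F₂.recC : EReal) +
      sInf {e : EReal | ∃ (x : X₁) (p : ProbabilityMeasure X₂), e = C x p}) :
    ∃ K : ℝ, ∀ (γ : Measure (X₁ × X₂)) (hγ : IsFiniteMeasure γ),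
      (K : EReal) ≤ wCost C F₁ F₂ μ₁ μ₂ γ hγ := by
  obtain ⟨r, s, hr, hs, hrs⟩ := exists_neg_lt_and_neg_lt_and_add_le hcoer
  have r_mem := F₁.mem_circDom_of_neg_lt_recC hr
  have s_mem := F₂.mem_circDom_of_neg_lt_recC hs
  have dual_ne_bot : eIntegral μ₁ (fun _ ↦ F₁.circ r) + eIntegral μ₂ (fun _ ↦ F₂.circ s) ≠ ⊥ :=
    EReal.add_ne_bot_iff.2 ⟨eIntegral_const_ne_bot r_mem, eIntegral_const_ne_bot s_mem⟩
  obtain ⟨K, -, hK⟩ := EReal.exists_between_coe_real (bot_lt_iff_ne_bot.2 dual_ne_bot)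
  refine ⟨K, fun γ hγ ↦ hK.le.trans ?_⟩
  refine eIntegral_circ_add_eIntegral_circ_le_wCost (φ₁ := fun _ ↦ r) (φ₂ := fun _ ↦ s)
    (integrable_const r) (integrable_const s) (fun _ ↦ r_mem) (fun _ ↦ s_mem) fun x p ↦ ?_
  simpa using hrs.trans (sInf_le ⟨x, p, rfl⟩)

end WeakDuality

theorem stmt8_general
    {X₁ : Type*} [TopologicalSpace X₁] [MeasurableSpace X₁] [OpensMeasurableSpace X₁]
    {X₂ : Type*} [TopologicalSpace X₂] [MeasurableSpace X₂] [OpensMeasurableSpace X₂]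
    [StandardBorelSpace X₂] [Nonempty X₂]
    (C : X₁ → ProbabilityMeasure X₂ → EReal) (F₁ F₂ : EntropyFn)
    (hcoer : (0 : EReal) < (F₁.recC : EReal) + (F₂.recC : EReal) +
      sInf {e : EReal | ∃ (x : X₁) (p : ProbabilityMeasure X₂), e = C x p})
    (μ₁ : Measure X₁) (μ₂ : Measure X₂) [IsFiniteMeasure μ₁] [IsFiniteMeasure μ₂] :
    sSup {e : EReal | ∃ φ ∈ lamSet C F₁ F₂,
      e = eIntegral μ₁ (fun x ↦ F₁.circ (φ.1 x)) + eIntegral μ₂ (fun x ↦ F₂.circ (φ.2 x))} ≤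
      wOpt C F₁ F₂ μ₁ μ₂ ∧
    ∃ K : ℝ, ∀ (γ : Measure (X₁ × X₂)) (hγ : IsFiniteMeasure γ),
      (K : EReal) ≤ wCost C F₁ F₂ μ₁ μ₂ γ hγ :=
  ⟨sSup_eIntegral_circ_le_wOpt, exists_forall_coe_le_wCost hcoer⟩

theorem stmt8
    {X₁ : Type*} [MetricSpace X₁] [PolishSpace X₁] [MeasurableSpace X₁] [BorelSpace X₁]
    {X₂ : Type*} [MetricSpace X₂] [PolishSpace X₂] [MeasurableSpace X₂] [BorelSpace X₂]
    [Nonempty X₂]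
    (C : X₁ → ProbabilityMeasure X₂ → EReal)
    (hClsc : LowerSemicontinuous fun q : X₁ × ProbabilityMeasure X₂ => C q.1 q.2)
    (hCbdd : ∃ K : ℝ, ∀ x p, (K : EReal) ≤ C x p)
    (hCconv : ∀ (x : X₁) (p q m : ProbabilityMeasure X₂) (t : ℝ), 0 ≤ t → t ≤ 1 →
      (m : Measure X₂) = ENNReal.ofReal t • (p : Measure X₂)
          + ENNReal.ofReal (1 - t) • (q : Measure X₂) →
      C x m ≤ (t : EReal) * C x p + ((1 - t : ℝ) : EReal) * C x q)
    (F₁ F₂ : EntropyFn)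
    (hcoer : (0 : EReal) < ((F₁.recC : ℝ≥0∞) : EReal) + ((F₂.recC : ℝ≥0∞) : EReal)
        + sInf { e : EReal | ∃ (x : X₁) (p : ProbabilityMeasure X₂), e = C x p })
    (μ₁ : Measure X₁) (μ₂ : Measure X₂) [IsFiniteMeasure μ₁] [IsFiniteMeasure μ₂] :
    sSup { e : EReal | ∃ φ ∈ lamSet C F₁ F₂,
        e = eIntegral μ₁ (fun x => F₁.circ (φ.1 x)) +
            eIntegral μ₂ (fun x => F₂.circ (φ.2 x)) } ≤ wOpt C F₁ F₂ μ₁ μ₂ ∧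
    ∃ K : ℝ, ∀ (γ : Measure (X₁ × X₂)) (hγ : IsFiniteMeasure γ),
      (K : EReal) ≤ wCost C F₁ F₂ μ₁ μ₂ γ hγ :=
  stmt8_general C F₁ F₂ hcoer μ₁ μ₂
end
end
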